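/- arXiv:math/0611893 — 6 statements merged into one kernel-verified Lean document; each statement's English description precedes it below -/
import Mathlib

section
/- Fix an even integer d ≥ 4. Then: (i) for every ε > 0 there exists N such that for all even n ≥ N, fmax(d,n;1) ≥ ((d−2)/(d−1) − ε)·C(n,2); and (ii) for all even n, fmax(d,n;1) ≤ (1 − 2^{−d})·n²/2. In particular, fmax(d,n;1)/C(n,2) lies between 1 − 1/(d−1) + o(1) and 1 − 2^{−d} + o(1) as n → ∞. -/
open Real

/-- A centrally symmetric polytope in `ℝ^d`: the convex hull of a finite set,
satisfying `P = -P`. -/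
def IsCSPolytope {d : ℕ} (P : Set (EuclideanSpace ℝ (Fin d))) : Prop :=
  (∃ V : Finset (EuclideanSpace ℝ (Fin d)), P = convexHull ℝ (V : Set (EuclideanSpace ℝ (Fin d)))) ∧
  P = -P

/-- The number of `j`-dimensional faces of `P`, a face being the intersection of `P`
with a supporting hyperplane, i.e. a nonempty exposed face. -/
noncomputable def faceCount {d : ℕ} (P : Set (EuclideanSpace ℝ (Fin d))) (j : ℕ) : ℕ :=
  Set.ncard {F : Set (EuclideanSpace ℝ (Fin d)) |
    IsExposed ℝ P F ∧ F.Nonempty ∧ Module.finrank ℝ (vectorSpan ℝ F) = j}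

/-- `fmax d n j`: the maximum number of `j`-faces of a `d`-dimensional centrally
symmetric polytope in `ℝ^d` with exactly `n` vertices. -/
noncomputable def fmax (d n j : ℕ) : ℕ :=
  sSup {m : ℕ | ∃ P : Set (EuclideanSpace ℝ (Fin d)),
    IsCSPolytope P ∧ affineSpan ℝ P = ⊤ ∧
    (Set.extremePoints ℝ P).ncard = n ∧ faceCount P j = m}

/-- trigonometric forms of degree `d - 1`. -/
def trigW (d : ℕ) : Submodule ℝ (ℝ → ℝ) :=
  Submodule.span ℝ (Set.range fun i : Fin d => fun t : ℝ => cos t ^ (i : ℕ) * sin t ^ (d - 1 - (i : ℕ)))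

lemma trigW_cos {d : ℕ} {f : ℝ → ℝ} (hf : f ∈ trigW d) :
    (fun t => cos t * f t) ∈ trigW (d + 1) := by
  unfold trigW at hf
  induction hf using Submodule.span_induction with
  | mem x h =>
    obtain ⟨i, rfl⟩ := h
    apply Submodule.subset_span
    refine ⟨⟨i + 1, by omega⟩, ?_⟩
    funext t
    have : d + 1 - 1 - ((i : ℕ) + 1) = d - 1 - i := by omega
    simp only [this]
    ring
  | zero => convert (trigW (d+1)).zero_mem using 1; funext t; simp
  | add x y _ _ hx hy =>
    convert (trigW (d+1)).add_mem hx hy using 1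
    funext t; simp; ring
  | smul a x _ hx =>
    convert (trigW (d+1)).smul_mem a hx using 1
    funext t; simp; ring

lemma trigW_sin {d : ℕ} {f : ℝ → ℝ} (hf : f ∈ trigW d) :
    (fun t => sin t * f t) ∈ trigW (d + 1) := by
  unfold trigW at hf
  induction hf using Submodule.span_induction with
  | mem x h =>
    obtain ⟨i, rfl⟩ := h
    apply Submodule.subset_span
    refine ⟨⟨i, by omega⟩, ?_⟩
    funext t
    have : d + 1 - 1 - (i : ℕ) = (d - 1 - i) + 1 := by omega
    simp only [this]
    ring
  | zero => convert (trigW (d+1)).zero_mem using 1; funext t; simp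
  | add x y _ _ hx hy =>
    convert (trigW (d+1)).add_mem hx hy using 1
    funext t; simp; ring
  | smul a x _ hx =>
    convert (trigW (d+1)).smul_mem a hx using 1
    funext t; simp; ring

lemma trigW_two {d : ℕ} {f : ℝ → ℝ} (hf : f ∈ trigW d) : f ∈ trigW (d + 2) := by
  have h1 := (trigW (d+2)).add_mem (trigW_cos (trigW_cos hf)) (trigW_sin (trigW_sin hf))
  convert h1 using 1
  funext t
  simp only [Pi.add_apply]
  linear_combination (-(f t)) * (sin_sq_add_cos_sq t)

lemma trigW_pad {d : ℕ} {f : ℝ → ℝ} (hf : f ∈ trigW d) (j : ℕ) : f ∈ trigW (d + 2 * j) := by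
  induction j with
  | zero => simpa using hf
  | succ j ih => exact trigW_two ih

lemma trigW_x {d : ℕ} {f : ℝ → ℝ} (hf : f ∈ trigW d) (μ : ℝ) :
    (fun t => cos (t - μ) * f t) ∈ trigW (d + 1) := by
  convert (trigW (d+1)).add_mem ((trigW (d+1)).smul_mem (cos μ) (trigW_cos hf))
    ((trigW (d+1)).smul_mem (sin μ) (trigW_sin hf)) using 1
  funext t
  simp [cos_sub]; ring

lemma trigW_one : (fun _ => 1 : ℝ → ℝ) ∈ trigW 1 := by
  apply Submodule.subset_span
  exact ⟨0, by funext t; simp⟩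

lemma trigW_cheb (μ lam : ℝ) (n : ℕ) :
    (fun t => (Polynomial.Chebyshev.T ℝ n).eval (lam * cos (t - μ))) ∈ trigW (n + 1) := by
  induction n using Nat.twoStepInduction with
  | zero => simpa using trigW_one
  | one =>
    convert (trigW 2).smul_mem lam (trigW_x trigW_one μ) using 1
    funext t; simp
  | more n h1 h2 =>
    convert (trigW (n+2+1)).sub_mem ((trigW (n+2+1)).smul_mem (2 * lam) (trigW_x h2 μ))
      (trigW_two h1) using 1
    funext t
    have := Polynomial.Chebyshev.T_add_two ℝ (n : ℤ)
    push_cast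
    rw [this]
    simp; ring

lemma trigW_prod (μ lam : ℝ) (c : ℕ → ℝ) (n : ℕ) :
    (fun t => cos (t - μ) * ∏ j ∈ Finset.range n, (lam ^ 2 * cos (t - μ) ^ 2 - c j)) ∈
      trigW (2 + 2 * n) := by
  induction n with
  | zero => simpa using trigW_x trigW_one μ
  | succ n ih =>
    change _ ∈ trigW (2 + 2 * n + 2)
    convert (trigW (2+2*n+2)).sub_mem ((trigW (2+2*n+2)).smul_mem (lam ^ 2) (trigW_x (trigW_x ih μ) μ))
      ((trigW (2+2*n+2)).smul_mem (c n) (trigW_two ih)) using 1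
    funext t
    simp [Finset.prod_range_succ]; ring

/-- Chebyshev extremal points, squared. -/
lemma cheb_ext (k : ℕ) (y : ℝ) (hy : |y| ≤ 1)
    (h : (Polynomial.Chebyshev.T ℝ (2 * k + 1 : ℕ)).eval y ^ 2 = 1) :
    ∃ j ∈ Finset.range (k + 1), y ^ 2 = cos (j * π / (2 * k + 1)) ^ 2 := by
  obtain ⟨h1, h2⟩ := abs_le.1 hy
  have hm : (0:ℝ) < 2 * k + 1 := by positivity
  rw [← cos_arccos h1 h2, Polynomial.Chebyshev.T_real_cos] at h
  have hs : sin ((2 * k + 1) * arccos y) = 0 := by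
    have := sin_sq_add_cos_sq ((2 * k + 1) * arccos y)
    push_cast at h
    rw [h] at this
    nlinarith
  obtain ⟨z, hz⟩ := sin_eq_zero_iff.1 hs
  have hz' : arccos y = z * π / (2 * k + 1) := by
    rw [eq_div_iff hm.ne', hz]; ring
  have h0 := arccos_nonneg y
  have hpi := arccos_le_pi y
  have z0 : 0 ≤ z := by
    have : (0:ℝ) ≤ z := by
      by_contra hlt
      push Not at hlt
      have : (z:ℝ) * π < 0 := mul_neg_of_neg_of_pos hlt pi_pos
      have : 0 ≤ (2 * (k:ℝ) + 1) * arccos y := by positivity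
      linarith
    exact_mod_cast this
  have z1 : z ≤ 2 * k + 1 := by
    have : (z:ℝ) ≤ 2 * k + 1 := by
      have : (z:ℝ) * π ≤ (2 * k + 1) * π := by
        rw [hz]; exact mul_le_mul_of_nonneg_left hpi hm.le
      exact le_of_mul_le_mul_right this pi_pos
    exact_mod_cast this
  obtain ⟨w, rfl⟩ := Int.eq_ofNat_of_zero_le z0
  have hy' : y = cos (w * π / (2 * k + 1)) := by
    rw [← cos_arccos h1 h2, hz']; simp
  by_cases hw : w ≤ k
  · exact ⟨w, by simp; omega, by rw [hy']⟩
  · refine ⟨2 * k + 1 - w, by simp; omega, ?_⟩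
    have hw2 : w ≤ 2 * k + 1 := by omega
    rw [hy']
    push_cast [hw2]
    have : (2 * (k:ℝ) + 1 - w) * π / (2 * k + 1) = π - w * π / (2 * k + 1) := by
      field_simp
    rw [this, cos_pi_sub]; ring

/-- Key: functional for an edge. -/
lemma edge_fun (k : ℕ) (τ μ : ℝ) (h0 : 0 ≤ τ) (hτ : τ ≤ k * π / (2 * k + 1)) (S : Finset ℝ) :
    ∃ g ∈ trigW (2 * k + 2), ∃ M : ℝ, (∀ t, cos (t - μ) = cos τ → g t = M) ∧
      ∀ t ∈ S, cos (t - μ) ≠ cos τ → g t < M := by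
  have hm : (0:ℝ) < 2 * k + 1 := by positivity
  set s := cos (k * π / (2 * k + 1)) with hs
  have hτ2 : (k:ℝ) * π / (2 * k + 1) < π / 2 := by
    rw [div_lt_div_iff₀ hm two_pos]
    nlinarith [pi_pos]
  have hkpos : 0 ≤ (k:ℝ) * π / (2 * k + 1) := by positivity
  have hs0 : 0 < s := cos_pos_of_mem_Ioo ⟨by linarith [pi_pos], hτ2⟩
  have hx0 : s ≤ cos τ := cos_le_cos_of_nonneg_of_le_pi h0 (by linarith [pi_pos]) hτ
  have hx00 : 0 < cos τ := hs0.trans_le hx0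
  set lam := s / cos τ with hlam
  have hl0 : 0 < lam := by positivity
  have hl1 : lam ≤ 1 := (div_le_one hx00).2 hx0
  have hlx : lam * cos τ = s := by rw [hlam]; field_simp
  set T := fun y : ℝ => (Polynomial.Chebyshev.T ℝ (2 * k + 1 : ℕ)).eval y with hT
  set σ : ℝ := (-1) ^ k with hσ
  have hσ2 : σ ^ 2 = 1 := by rw [hσ, ← pow_mul, mul_comm, pow_mul]; simp
  have hTs : T s = σ := by
    simp only [hT, hs]
    rw [Polynomial.Chebyshev.T_real_cos]
    have : ((2 * k + 1 : ℕ) : ℤ) * ((k:ℝ) * π / (2 * k + 1)) = k * π := by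
      push_cast; field_simp
    rw [this, cos_nat_mul_pi]
  have hTns : T (-s) = -σ := by
    simp only [hT, hs]
    rw [← cos_pi_sub, Polynomial.Chebyshev.T_real_cos]
    have : ((2 * k + 1 : ℕ) : ℤ) * (π - (k:ℝ) * π / (2 * k + 1)) = (k + 1 : ℕ) * π := by
      push_cast; field_simp; ring
    rw [this, cos_nat_mul_pi, pow_succ]; ring
  set c : ℕ → ℝ := fun j => cos (j * π / (2 * k + 1)) ^ 2 with hc
  set q : ℝ → ℝ := fun x => x * ∏ j ∈ Finset.range k, (lam ^ 2 * x ^ 2 - c j) with hq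
  have hq0 : q (cos τ) ≠ 0 := by
    simp only [hq]
    refine mul_ne_zero hx00.ne' (Finset.prod_ne_zero_iff.2 ?_)
    intro j hj
    rw [← mul_pow, hlx, sub_ne_zero]
    have hj' : (j:ℝ) < k := by exact_mod_cast Finset.mem_range.1 hj
    have : s < cos (j * π / (2 * k + 1)) := by
      refine cos_lt_cos_of_nonneg_of_le_pi (by positivity) (by linarith [pi_pos]) ?_
      have := pi_pos
      gcongr
    exact (pow_lt_pow_left₀ this hs0.le two_ne_zero).ne
  -- dichotomy
  have key : ∀ x : ℝ, |x| ≤ 1 → x ≠ cos τ → σ * T (lam * x) ≤ 1 ∧ (σ * T (lam * x) = 1 → q x = 0) := by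
    intro x hx hne
    have hy : |lam * x| ≤ 1 := by
      rw [abs_mul, abs_of_pos hl0]
      exact mul_le_one₀ hl1 (abs_nonneg _) hx
    have hb := Polynomial.Chebyshev.abs_eval_T_real_le_one (2 * k + 1 : ℕ) hy
    have hσa : |σ| = 1 := by rw [hσ]; simp
    constructor
    · refine (le_abs_self _).trans ?_
      rw [abs_mul, hσa, one_mul]; exact hb
    · intro h1
      have : T (lam * x) ^ 2 = 1 := by
        have : (σ * T (lam * x)) ^ 2 = 1 := by rw [h1]; norm_num
        rwa [mul_pow, hσ2, one_mul] at this
      obtain ⟨j, hj, hjy⟩ := cheb_ext k _ hy this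
      rw [Finset.mem_range] at hj
      rcases Nat.lt_succ_iff_lt_or_eq.1 hj with hlt | rfl
      · simp only [hq]
        rw [Finset.prod_eq_zero (Finset.mem_range.2 hlt), mul_zero]
        rw [← mul_pow, hjy, sub_self]
      · exfalso
        rcases sq_eq_sq_iff_eq_or_eq_neg.1 hjy with h | h
        · apply hne
          have : lam * x = lam * cos τ := by rw [h, hlx]
          exact mul_left_cancel₀ hl0.ne' this
        · rw [h] at h1
          rw [hTns] at h1
          nlinarith
  set η := SignType.sign (q (cos τ)) with hη
  have hηq : 0 < (η : ℝ) * q (cos τ) := by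
    rw [hη, sign_mul_self]; exact abs_pos.2 hq0
  have ev : ∀ᶠ δ in nhdsWithin (0:ℝ) (Set.Ioi 0), ∀ t ∈ S, cos (t - μ) ≠ cos τ →
      σ * T (lam * cos (t - μ)) + δ * (η * q (cos (t - μ))) < 1 + δ * (η * q (cos τ)) := by
    rw [Filter.eventually_all_finset]
    intro t _
    by_cases hne : cos (t - μ) = cos τ
    · simp [hne]
    obtain ⟨h1, h2⟩ := key _ (abs_cos_le_one _) hne
    rcases h1.lt_or_eq with h | h
    · have : ∀ᶠ δ in nhds (0:ℝ), 
        σ * T (lam * cos (t - μ)) + δ * (η * q (cos (t - μ))) < 1 + δ * (η * q (cos τ)) := by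
        apply ContinuousAt.eventually_lt
        · fun_prop
        · fun_prop
        · simpa using h
      filter_upwards [nhdsWithin_le_nhds this] with δ hδ _ using hδ
    · filter_upwards [self_mem_nhdsWithin] with δ hδ _
      rw [h, h2 h]
      have : 0 < δ * (η * q (cos τ)) := mul_pos hδ hηq
      simpa using this
  obtain ⟨δ, hδ⟩ := ev.exists
  refine ⟨fun t => σ * T (lam * cos (t - μ)) + δ * (η * q (cos (t - μ))), ?_, 
    1 + δ * (η * q (cos τ)), ?_, hδ⟩
  · have e1 := (trigW (2*k+2)).smul_mem σ (trigW_cheb μ lam (2 * k + 1))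
    have e2 := (trigW (2*k+2)).smul_mem (δ * η) (show _ ∈ trigW (2*k+2) from by 
      rw [add_comm]; exact (trigW_prod μ lam c k))
    convert (trigW (2*k+2)).add_mem e1 e2 using 1
    funext t
    simp only [hT, hq, Pi.add_apply, Pi.smul_apply, smul_eq_mul]
    ring
  · intro t ht
    simp only [ht, hlx, hTs]
    rw [← sq, hσ2]
lemma face_of_fun {d : ℕ} (V S : Finset (EuclideanSpace ℝ (Fin d))) (hSV : S ⊆ V)
    (l : StrongDual ℝ (EuclideanSpace ℝ (Fin d))) (M : ℝ) (h1 : ∀ x ∈ S, l x = M)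
    (h2 : ∀ x ∈ V, x ∉ S → l x < M) (hS : S.Nonempty) :
    IsExposed ℝ (convexHull ℝ (V : Set (EuclideanSpace ℝ (Fin d)))) (convexHull ℝ (S : Set _)) ∧
    ∀ x ∈ V, x ∈ convexHull ℝ (S : Set (EuclideanSpace ℝ (Fin d))) → x ∈ S := by
  have hle : ∀ x ∈ convexHull ℝ (V : Set (EuclideanSpace ℝ (Fin d))), l x ≤ M := by
    have : convexHull ℝ (V : Set (EuclideanSpace ℝ (Fin d))) ⊆ {x | l x ≤ M} := by
      apply convexHull_min
      · intro x hx
        by_cases hxS : x ∈ S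
        · exact (h1 x hxS).le
        · exact (h2 x hx hxS).le
      · exact convex_halfSpace_le l.toLinearMap.isLinear M
    exact this
  have hS' : ∀ x ∈ convexHull ℝ (S : Set (EuclideanSpace ℝ (Fin d))), l x = M := by
    have : convexHull ℝ (S : Set (EuclideanSpace ℝ (Fin d))) ⊆ {x | l x = M} := by
      apply convexHull_min
      · intro x hx
        exact h1 x hx
      · exact convex_hyperplane l.toLinearMap.isLinear M
    exact this
  obtain ⟨s0, hs0⟩ := hS
  refine ⟨fun _ => ⟨l, ?_⟩, ?_⟩
  · ext x
    constructor
    · intro hx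
      exact ⟨convexHull_mono (by exact_mod_cast hSV) hx, fun y hy => (hle y hy).trans (hS' x hx).ge⟩
    · rintro ⟨hx, hmax⟩
      have hM : M ≤ l x := by
        rw [← h1 s0 hs0]
        exact hmax _ (subset_convexHull ℝ _ (hSV hs0))
      rw [Finset.mem_convexHull'] at hx ⊢
      obtain ⟨w, hw0, hw1, rfl⟩ := hx
      have hz : ∑ y ∈ V, w y * (M - l y) ≤ 0 := by
        simp only [mul_sub, Finset.sum_sub_distrib, ← Finset.sum_mul, hw1]
        simp only [map_sum, map_smul, smul_eq_mul] at hM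
        linarith
      have hnn : ∀ y ∈ V, 0 ≤ w y * (M - l y) := fun y hy =>
        mul_nonneg (hw0 y hy) (sub_nonneg.2 (hle y (subset_convexHull ℝ _ hy)))
      have hz' := (Finset.sum_eq_zero_iff_of_nonneg hnn).1 (le_antisymm hz (Finset.sum_nonneg hnn))
      have hw : ∀ y ∈ V, y ∉ S → w y = 0 := by
        intro y hy hyS
        rcases mul_eq_zero.1 (hz' y hy) with h | h
        · exact h
        · have := h2 y hy hyS
          linarith
      refine ⟨w, fun y hy => hw0 y (hSV hy), ?_, ?_⟩
      · rw [← hw1]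
        exact Finset.sum_subset hSV hw
      · exact Finset.sum_subset hSV fun y hy hyS => by rw [hw y hy hyS, zero_smul]
  · intro x hxV hx
    by_contra hxS
    exact (h2 x hxV hxS).ne (hS' x hx)

lemma finrank_pair {d : ℕ} (u v : EuclideanSpace ℝ (Fin d)) (huv : u ≠ v) :
    Module.finrank ℝ (vectorSpan ℝ (convexHull ℝ ({u, v} : Set (EuclideanSpace ℝ (Fin d))))) = 1 := by
  rw [← direction_affineSpan, affineSpan_convexHull, direction_affineSpan,
    vectorSpan_eq_span_vsub_set_right ℝ (show u ∈ ({u, v} : Set _) by simp)]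
  have : Submodule.span ℝ ((fun x => x -ᵥ u) '' ({u, v} : Set (EuclideanSpace ℝ (Fin d)))) =
      Submodule.span ℝ {v - u} := by
    simp [Set.image_pair]
  rw [this, finrank_span_singleton (sub_ne_zero.2 huv.symm)]

lemma edge_struct {d : ℕ} {P F : Set (EuclideanSpace ℝ (Fin d))} (hP : IsCompact P)
    (hPc : Convex ℝ P) (hF : IsExposed ℝ P F) (hne : F.Nonempty)
    (h1 : Module.finrank ℝ (vectorSpan ℝ F) = 1) :
    ∃ u ∈ P.extremePoints ℝ, ∃ v ∈ P.extremePoints ℝ, u ≠ v ∧ F = segment ℝ u v := by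
  have hFc : IsCompact F := hF.isCompact hP
  have hFv : Convex ℝ F := hF.convex hPc
  have hsub := hF.isExtreme.extremePoints_subset_extremePoints
  have hKM := closure_convexHull_extremePoints hFc hFv
  have hnt : (F.extremePoints ℝ).Nontrivial := by
    by_contra hns
    rw [Set.not_nontrivial_iff] at hns
    rcases hns.eq_empty_or_singleton with h | ⟨x, h⟩
    · rw [h] at hKM
      simp at hKM
      exact hne.ne_empty hKM.symm
    · rw [h] at hKM
      simp at hKM
      rw [← hKM, vectorSpan_singleton, finrank_bot] at h1
      omega
  obtain ⟨u, hu, v, hv, huv⟩ := hnt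
  refine ⟨u, hsub hu, v, hsub hv, huv, ?_⟩
  apply Set.Subset.antisymm
  · intro w hw
    have hcol : Collinear ℝ F := by
      rw [collinear_iff_finrank_le_one]; exact h1.le
    have hcol' : Collinear ℝ ({u, v, w} : Set (EuclideanSpace ℝ (Fin d))) := by
      apply hcol.subset
      rintro x (rfl | rfl | rfl)
      · exact hu.1
      · exact hv.1
      · exact hw
    rw [mem_extremePoints_iff_forall_segment] at hu hv
    rcases hcol'.wbtw_or_wbtw_or_wbtw with h | h | h
    · rw [← mem_segment_iff_wbtw] at h
      rcases hv.2 u hu.1 w hw h with h | h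
      · exact absurd h huv
      · rw [← h]; exact right_mem_segment ℝ _ _
    · rw [← mem_segment_iff_wbtw] at h
      rw [segment_symm]; exact h
    · rw [← mem_segment_iff_wbtw] at h
      rcases hu.2 w hw v hv.1 h with h | h
      · rw [← h]; exact left_mem_segment ℝ _ _
      · exact absurd h.symm huv
  · exact hFv.segment_subset hu.1 hv.1

lemma faces_finite {d : ℕ} {P : Set (EuclideanSpace ℝ (Fin d))} (hP : IsCompact P)
    (hPc : Convex ℝ P) (hfin : (P.extremePoints ℝ).Finite) :
    {F : Set (EuclideanSpace ℝ (Fin d)) |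
      IsExposed ℝ P F ∧ F.Nonempty ∧ Module.finrank ℝ (vectorSpan ℝ F) = 1}.Finite := by
  apply ((hfin.prod hfin).image (fun p => segment ℝ p.1 p.2)).subset
  rintro F ⟨h1, h2, h3⟩
  obtain ⟨u, hu, v, hv, -, rfl⟩ := edge_struct hP hPc h1 h2 h3
  exact ⟨(u, v), ⟨hu, hv⟩, rfl⟩

lemma not_interior {d : ℕ} (hd : 2 ≤ d) {P F : Set (EuclideanSpace ℝ (Fin d))}
    (hF : IsExposed ℝ P F) (hspan : affineSpan ℝ P = ⊤)
    (h1 : Module.finrank ℝ (vectorSpan ℝ F) = 1) {x : EuclideanSpace ℝ (Fin d)} (hx : x ∈ F) :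
    x ∉ interior P := by
  intro hi
  obtain ⟨l, rfl⟩ := hF ⟨x, hx⟩
  have hloc : IsLocalMax l x := by
    filter_upwards [mem_interior_iff_mem_nhds.1 hi] with y hy using hx.2 y hy
  have hl : l = 0 := by
    have := hloc.hasFDerivAt_eq_zero l.hasFDerivAt
    exact this
  have hFP : {x ∈ P | ∀ y ∈ P, l y ≤ l x} = P := by
    ext y; simp [hl]
  rw [hFP, ← direction_affineSpan, hspan, AffineSubspace.direction_top, finrank_top, finrank_euclideanSpace_fin] at h1
  omega

open scoped Pointwise in
lemma clique_vol {d : ℕ} {P : Set (EuclideanSpace ℝ (Fin d))} (hP : IsCompact P)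
    (hPc : Convex ℝ P) (hne : (interior P).Nonempty) (S : Finset (EuclideanSpace ℝ (Fin d)))
    (hS : ∀ u ∈ S, u ∈ P)
    (hdis : ∀ u ∈ S, ∀ v ∈ S, u ≠ v → ∀ p ∈ interior P, ∀ q ∈ interior P, u + p ≠ v + q) :
    S.card ≤ 2 ^ d := by
  set μ := (MeasureTheory.volume : MeasureTheory.Measure (EuclideanSpace ℝ (Fin d)))
  have hpos : μ (interior P) ≠ 0 := (isOpen_interior.measure_pos μ hne).ne'
  have hfin : μ (interior P) ≠ ⊤ :=
    ((MeasureTheory.measure_mono interior_subset).trans_lt hP.measure_lt_top).ne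
  have hU : μ (⋃ u ∈ S, (fun x => u + x) '' interior P) = S.card * μ (interior P) := by
    rw [MeasureTheory.measure_biUnion_finset]
    · simp [MeasureTheory.measure_preimage_add]
    · intro u hu v hv huv
      rw [Function.onFun, Set.disjoint_left]
      rintro _ ⟨p, hp, rfl⟩ ⟨q, hq, h⟩
      exact hdis u hu v hv huv p hp q hq h.symm
    · intro u _
      exact ((Homeomorph.addLeft u).isOpenMap _ isOpen_interior).measurableSet
  have hsub : (⋃ u ∈ S, (fun x => u + x) '' interior P) ⊆ (2:ℝ) • interior P := by
    intro y hy
    simp only [Set.mem_iUnion] at hy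
    obtain ⟨u, hu, p, hp, rfl⟩ := hy
    refine ⟨(1/2:ℝ) • u + (1/2:ℝ) • p, ?_, ?_⟩
    · exact hPc.combo_self_interior_mem_interior (hS u hu) hp (by norm_num) (by norm_num) (by norm_num)
    · simp only [smul_add, smul_smul]; norm_num
  have hle := MeasureTheory.measure_mono (μ := μ) hsub
  rw [hU, MeasureTheory.Measure.addHaar_smul] at hle
  rw [ENNReal.mul_le_mul_iff_left hpos hfin] at hle
  simp at hle
  have h2 : ENNReal.ofReal 2 = 2 := by norm_num
  have : ((S.card : ℕ) : ENNReal) ≤ ((2 ^ d : ℕ) : ENNReal) := by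
    push_cast
    simpa [h2] using hle
  exact_mod_cast this
lemma neg_ext {d : ℕ} {P : Set (EuclideanSpace ℝ (Fin d))} (hcs : ∀ x ∈ P, -x ∈ P)
    {v : EuclideanSpace ℝ (Fin d)} (hv : v ∈ P.extremePoints ℝ) : -v ∈ P.extremePoints ℝ := by
  rw [mem_extremePoints_iff_forall_segment] at hv ⊢
  refine ⟨hcs _ hv.1, fun x hx y hy h => ?_⟩
  have : v ∈ segment ℝ (-x) (-y) := by
    obtain ⟨a, b, ha, hb, hab, h⟩ := h
    refine ⟨a, b, ha, hb, hab, ?_⟩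
    rw [smul_neg, smul_neg, ← neg_add, h, neg_neg]
  rcases hv.2 _ (hcs x hx) _ (hcs y hy) this with h | h
  · left; rw [← h, neg_neg]
  · right; rw [← h, neg_neg]

lemma neg_int {d : ℕ} {P : Set (EuclideanSpace ℝ (Fin d))} (hcs : ∀ x ∈ P, -x ∈ P)
    {p : EuclideanSpace ℝ (Fin d)} (hp : p ∈ interior P) : -p ∈ interior P := by
  rw [mem_interior] at hp ⊢
  obtain ⟨t, ht, hto, hpt⟩ := hp
  refine ⟨(fun x => -x) ⁻¹' t, fun x hx => ?_, hto.preimage continuous_neg, by simpa using hpt⟩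
  have := hcs _ (ht hx)
  simpa using this

lemma turan_bound (n r : ℕ) (hr : 0 < r) (G : SimpleGraph (Fin n)) [DecidableRel G.Adj]
    (h : G.CliqueFree (r + 1)) : 2 * r * G.edgeFinset.card ≤ (r - 1) * n ^ 2 := by
  have h1 := (SimpleGraph.isTuranMaximal_turanGraph (n := n) hr).2 h
  have h2 := SimpleGraph.mul_card_edgeFinset_turanGraph_le (n := n) (r := r)
  refine le_trans (Nat.mul_le_mul_left _ ?_) h2
  convert h1

open Classical in
lemma upper {d n : ℕ} (hd : 2 ≤ d) {P : Set (EuclideanSpace ℝ (Fin d))} (hP : IsCSPolytope P)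
    (hspan : affineSpan ℝ P = ⊤) (hn : (P.extremePoints ℝ).ncard = n) :
    2 * 2 ^ d * faceCount P 1 ≤ (2 ^ d - 1) * n ^ 2 := by
  obtain ⟨⟨V, hV⟩, hcs0⟩ := hP
  have hcs : ∀ x ∈ P, -x ∈ P := by
    intro x hx
    rw [hcs0]; simpa using hx
  have hPk : IsCompact P := by rw [hV]; exact V.finite_toSet.isCompact_convexHull ℝ
  have hPc : Convex ℝ P := by rw [hV]; exact convex_convexHull ℝ _
  have hfin : (P.extremePoints ℝ).Finite := by
    rw [hV]; exact V.finite_toSet.subset (extremePoints_convexHull_subset (𝕜 := ℝ))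
  have hint : (interior P).Nonempty := hPc.interior_nonempty_iff_affineSpan_eq_top.2 hspan
  have : Finite (P.extremePoints ℝ) := hfin
  have e : (P.extremePoints ℝ) ≃ Fin n := Finite.equivFinOfCardEq (by rw [Nat.card_coe_set_eq, hn])
  let G : SimpleGraph (Fin n) :=
    { Adj := fun i j => ∀ p ∈ interior P, ∀ q ∈ interior P,
        ((e.symm i : EuclideanSpace ℝ (Fin d)) + p ≠ (e.symm j : EuclideanSpace ℝ (Fin d)) + q)
      symm := ⟨fun i j h p hp q hq hh => h q hq p hp hh.symm⟩
      loopless := ⟨fun i h => by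
        obtain ⟨p, hp⟩ := hint
        exact h p hp p hp rfl⟩ }
  have hcf : G.CliqueFree (2 ^ d + 1) := by
    intro s hs
    have := clique_vol hPk hPc hint (s.image fun i => (e.symm i : EuclideanSpace ℝ (Fin d)))
      (by
        intro u hu
        obtain ⟨i, _, rfl⟩ := Finset.mem_image.1 hu
        exact (e.symm i).2.1)
      (by
        intro u hu v hv huv
        obtain ⟨i, hi, rfl⟩ := Finset.mem_image.1 hu
        obtain ⟨j, hj, rfl⟩ := Finset.mem_image.1 hv
        have hij : i ≠ j := by rintro rfl; exact huv rfl
        exact hs.1 hi hj hij)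
    rw [Finset.card_image_of_injective _ (fun i j h => e.symm.injective (Subtype.ext h)), hs.2] at this
    omega
  have hT := turan_bound n (2 ^ d) (by positivity) G hcf
  have hF := faces_finite hPk hPc hfin
  set Fs := {F : Set (EuclideanSpace ℝ (Fin d)) |
      IsExposed ℝ P F ∧ F.Nonempty ∧ Module.finrank ℝ (vectorSpan ℝ F) = 1} with hFs
  have hstr : ∀ F : Fs, ∃ u v : P.extremePoints ℝ, u ≠ v ∧ (F : Set _) = segment ℝ u.1 v.1 := by
    rintro ⟨F, h1, h2, h3⟩
    obtain ⟨u, hu, v, hv, huv, h⟩ := edge_struct hPk hPc h1 h2 h3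
    exact ⟨⟨u, hu⟩, ⟨v, hv⟩, fun hh => huv (congrArg Subtype.val hh), h⟩
  choose a b hab hseg using hstr
  have hadj : ∀ F : Fs, ∀ u v : P.extremePoints ℝ, (F : Set _) = segment ℝ u.1 v.1 →
      G.Adj (e u) (e ⟨-v.1, neg_ext hcs v.2⟩) := by
    intro F u v huv p hp q hq h
    simp only [Equiv.symm_apply_apply] at h
    have hmid : (1/2:ℝ) • u.1 + (1/2:ℝ) • v.1 ∈ F.1 := by
      rw [huv]
      exact ⟨1/2, 1/2, by norm_num, by norm_num, by norm_num, rfl⟩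
    apply not_interior hd F.2.1 hspan F.2.2.2 hmid
    have h' : (1/2:ℝ) • u.1 + (1/2:ℝ) • v.1 = (1/2:ℝ) • q + (1/2:ℝ) • (-p) := by
      rw [← smul_add, ← smul_add]
      congr 1
      have : u.1 = -v.1 + q - p := eq_sub_of_add_eq h
      rw [this]; abel
    rw [h']
    exact hPc.interior (neg_int hcs hq |> fun _ => hq) (neg_int hcs hp) (by norm_num) (by norm_num)
      (by norm_num)
  have : Finite Fs := hF
  have : Fintype Fs := Fintype.ofFinite _
  let φ : Fs × Bool → G.Dart := fun x =>
    if x.2 then ⟨(_, _), hadj x.1 (a x.1) (b x.1) (hseg x.1)⟩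
    else ⟨(_, _), hadj x.1 (b x.1) (a x.1) (by rw [segment_symm]; exact hseg x.1)⟩
  have hφ : Function.Injective φ := by
    rintro ⟨F, x⟩ ⟨F', y⟩ h
    cases x <;> cases y <;>
      simp [φ, SimpleGraph.Dart.ext_iff, Prod.ext_iff, Subtype.ext_iff] at h
    · have : F = F' := by
        apply Subtype.ext
        rw [hseg F, hseg F', h.1, h.2]
      rw [this]
    · exfalso
      have : F = F' := by
        apply Subtype.ext
        rw [hseg F, hseg F', h.1, h.2, segment_symm]
      subst this
      exact hab F (Subtype.ext h.2)
    · exfalso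
      have : F = F' := by
        apply Subtype.ext
        rw [hseg F, hseg F', h.1, h.2, segment_symm]
      subst this
      exact hab F (Subtype.ext h.1)
    · have : F = F' := by
        apply Subtype.ext
        rw [hseg F, hseg F', h.1, h.2]
      rw [this]
  have hcard := Fintype.card_le_of_injective φ hφ
  rw [G.dart_card_eq_twice_card_edges, Fintype.card_prod, Fintype.card_bool] at hcard
  have hfc : faceCount P 1 = Fintype.card Fs := by
    rw [faceCount, ← Nat.card_coe_set_eq, Nat.card_eq_fintype_card]
  rw [hfc]
  calc 2 * 2 ^ d * Fintype.card Fs ≤ 2 * 2 ^ d * G.edgeFinset.card := by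
        apply Nat.mul_le_mul_left; omega
    _ ≤ _ := hT
/-- The (odd) moment curve. -/
noncomputable def mU (d : ℕ) (t : ℝ) : EuclideanSpace ℝ (Fin d) :=
  WithLp.toLp 2 (fun i : Fin d => cos t ^ (i : ℕ) * sin t ^ (d - 1 - (i : ℕ)))

/-- The points on the curve. -/
noncomputable def mpt (d n j : ℕ) : EuclideanSpace ℝ (Fin d) := mU d (2 * π * j / n)

lemma mU_fun {d : ℕ} {g : ℝ → ℝ} (hg : g ∈ trigW d) :
    ∃ l : StrongDual ℝ (EuclideanSpace ℝ (Fin d)), ∀ t, l (mU d t) = g t := by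
  obtain ⟨c, rfl⟩ := (Submodule.mem_span_range_iff_exists_fun ℝ).1 hg
  refine ⟨∑ i, c i • EuclideanSpace.proj i, fun t => ?_⟩
  simp [mU]

lemma mU_pi {d : ℕ} (hd : Even d) (t : ℝ) : mU d (t + π) = - mU d t := by
  ext i
  simp only [mU, cos_add_pi, sin_add_pi, PiLp.neg_apply]
  rw [neg_pow (cos t), neg_pow (sin t)]
  have h : (-1 : ℝ) ^ (i : ℕ) * (-1) ^ (d - 1 - (i : ℕ)) = -1 := by
    rw [← pow_add]
    apply Odd.neg_one_pow
    have := i.2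
    obtain ⟨r, hr⟩ := hd
    exact ⟨r - 1, by omega⟩
  linear_combination (cos t ^ (i : ℕ) * sin t ^ (d - 1 - (i : ℕ))) * h

lemma mpt_mod (d n j : ℕ) (hn : 0 < n) : mpt d n j = mpt d n (j % n) := by
  have hn' : (n : ℝ) ≠ 0 := by positivity
  have h : 2 * π * (j:ℝ) / n = 2 * π * ((j % n : ℕ) : ℝ) / n + ((j / n : ℕ) : ℝ) * (2 * π) := by
    have : (j:ℝ) = ((j % n : ℕ) : ℝ) + n * ((j / n : ℕ) : ℝ) := by
      exact_mod_cast (Nat.mod_add_div j n).symm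
    field_simp
    linear_combination this
  unfold mpt mU
  rw [h, cos_add_nat_mul_two_pi, sin_add_nat_mul_two_pi]

lemma mpt_neg {d : ℕ} (hd : Even d) (h j : ℕ) (hh : 0 < h) : - mpt d (h + h) j = mpt d (h + h) (j + h) := by
  unfold mpt
  rw [← mU_pi hd]
  congr 1
  push_cast
  field_simp
  ring

lemma cos_pts (n i r j : ℕ) (hn : 0 < n)
    (h : cos (2 * π * j / n - π * (2 * i + r) / n) = cos (π * r / n)) :
    j ≡ i [MOD n] ∨ j ≡ i + r [MOD n] := by
  have hn' : (n : ℝ) ≠ 0 := by positivity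
  have hp := pi_pos.ne'
  obtain ⟨k, hk | hk⟩ := cos_eq_cos_iff.1 h
  · right
    have : (j:ℝ) = i + r - k * n := by
      field_simp at hk
      linarith
    have : (j:ℤ) = i + r - k * n := by exact_mod_cast this
    rw [← Int.natCast_modEq_iff, Int.modEq_iff_dvd]
    exact ⟨k, by push_cast; rw [this]; ring⟩
  · left
    have : (j:ℝ) = i + k * n := by
      field_simp at hk
      linarith
    have : (j:ℤ) = i + k * n := by exact_mod_cast this
    rw [← Int.natCast_modEq_iff, Int.modEq_iff_dvd]
    exact ⟨-k, by rw [this]; ring⟩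

lemma mpt_face (k n i r : ℕ) (hn : 0 < n) (hr : (2 * k + 1) * r ≤ k * n) :
    ∃ (l : StrongDual ℝ (EuclideanSpace ℝ (Fin (2 * k + 2)))) (M : ℝ),
      l (mpt _ n i) = M ∧ l (mpt _ n (i + r)) = M ∧
      ∀ j < n, ¬ j ≡ i [MOD n] → ¬ j ≡ i + r [MOD n] → l (mpt _ n j) < M := by
  have hn' : (0 : ℝ) < n := by positivity
  obtain ⟨g, hg, M, h1, h2⟩ := edge_fun k (π * r / n) (π * (2 * i + r) / n) (by positivity)
    (by
      rw [div_le_div_iff₀ hn' (by positivity)]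
      have : ((2 * k + 1) * r : ℝ) ≤ k * n := by exact_mod_cast hr
      nlinarith [pi_pos]) ((Finset.range n).image fun j : ℕ => 2 * π * j / n)
  obtain ⟨l, hl⟩ := mU_fun hg
  refine ⟨l, M, ?_, ?_, ?_⟩
  · rw [mpt, hl]
    apply h1
    rw [← cos_neg]
    congr 1
    ring
  · rw [mpt, hl]
    apply h1
    congr 1
    push_cast
    ring
  · intro j hj hj1 hj2
    rw [mpt, hl]
    apply h2
    · exact Finset.mem_image.2 ⟨j, Finset.mem_range.2 hj, rfl⟩
    · intro h
      rcases cos_pts n i r j hn h with h | h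
      · exact hj1 h
      · exact hj2 h

lemma mpt_eq_iff (k n a b : ℕ) (hn : 0 < n) :
    mpt (2 * k + 2) n a = mpt _ n b ↔ a ≡ b [MOD n] := by
  constructor
  · intro h
    rw [mpt_mod _ _ b hn] at h
    obtain ⟨l, M, h1, -, h2⟩ := mpt_face k n a 0 hn (by simp)
    by_contra hne
    have hb : ¬ b % n ≡ a [MOD n] := fun hh => hne ((Nat.mod_modEq b n).symm.trans hh).symm
    have := h2 (b % n) (Nat.mod_lt _ hn) hb (by simpa using hb)
    rw [← h, h1] at this
    exact lt_irrefl _ this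
  · intro h
    rw [mpt_mod _ _ a hn, mpt_mod _ _ b hn, h]

lemma mpt_span (d n : ℕ) (hd : 0 < d) (hn : 2 * d < n) :
    Submodule.span ℝ (Set.range fun j : ℕ => mpt d n j) = ⊤ := by
  by_contra hne
  obtain ⟨f, hf0, hf⟩ := Submodule.exists_le_ker_of_lt_top _ (lt_top_iff_ne_top.2 hne)
  have hfx : ∀ x : EuclideanSpace ℝ (Fin d), f x = ∑ i, f (EuclideanSpace.single i 1) * x i := by
    intro x
    conv_lhs => rw [← (EuclideanSpace.basisFun (Fin d) ℝ).sum_repr x]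
    simp [mul_comm]
  set a : Fin d → ℝ := fun i => f (EuclideanSpace.single i 1) with ha
  set p : Polynomial ℝ := ∑ i : Fin d, Polynomial.monomial (i : ℕ) (a i) with hp
  have hn' : (0 : ℝ) < n := by
    have : 0 < n := by omega
    exact_mod_cast this
  set θ : Fin d → ℝ := fun j => 2 * π * ((j : ℕ) + 1 : ℕ) / n with hθ
  have hθ0 : ∀ j, 0 < θ j := fun j => by simp only [hθ]; positivity
  have hθ1 : ∀ j, θ j < π := fun j => by
    simp only [hθ]
    rw [div_lt_iff₀ hn']
    have : 2 * ((j:ℕ) + 1) < n := by have := j.2; omega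
    have : (2 * (((j:ℕ) + 1 : ℕ) : ℝ)) < n := by exact_mod_cast this
    nlinarith [pi_pos]
  have hsin : ∀ j, 0 < sin (θ j) := fun j => sin_pos_of_pos_of_lt_pi (hθ0 j) (hθ1 j)
  have hp0 : p = 0 := by
    apply Polynomial.eq_zero_of_natDegree_lt_card_of_eval_eq_zero p
      (f := fun j : Fin d => cos (θ j) / sin (θ j))
    · intro i j hij
      simp only at hij
      rw [div_eq_div_iff (hsin i).ne' (hsin j).ne'] at hij
      have h0 : sin (θ j - θ i) = 0 := by rw [sin_sub]; linarith
      have h1 := (sin_eq_zero_iff_of_lt_of_lt (by linarith [hθ0 j, hθ1 i]) (by linarith [hθ0 i, hθ1 j])).1 h0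
      have h2 : θ j = θ i := by linarith
      simp only [hθ] at h2
      have hpi := pi_pos.ne'
      field_simp at h2
      have h3 : (j:ℕ) + 1 = (i:ℕ) + 1 := by exact_mod_cast h2
      apply Fin.ext; omega
    · intro j
      have h1 : f (mpt d n ((j:ℕ) + 1)) = 0 := hf (Submodule.subset_span ⟨_, rfl⟩)
      rw [hfx] at h1
      have h2 : ∑ i : Fin d, a i * (mpt d n ((j:ℕ)+1)) i =
          sin (θ j) ^ (d - 1) * p.eval (cos (θ j) / sin (θ j)) := by
        simp only [hp, Polynomial.eval_finsetSum, Polynomial.eval_monomial, Finset.mul_sum]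
        apply Finset.sum_congr rfl
        intro i _
        have e : sin (θ j) ^ (d - 1) = sin (θ j) ^ (d - 1 - (i:ℕ)) * sin (θ j) ^ (i:ℕ) := by
          rw [← pow_add]; congr 1; have := i.2; omega
        have e2 : mpt d n ((j:ℕ)+1) i = cos (θ j) ^ (i:ℕ) * sin (θ j) ^ (d - 1 - (i:ℕ)) := rfl
        rw [e, e2, div_pow]
        have := (hsin j).ne'
        field_simp
      rw [h2] at h1
      exact (mul_eq_zero.1 h1).resolve_left (pow_ne_zero _ (hsin j).ne')
    · rw [Fintype.card_fin]
      refine lt_of_le_of_lt (Polynomial.natDegree_sum_le_of_forall_le (n := d - 1) _ _ ?_) (by omega)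
      intro i _
      refine (Polynomial.natDegree_monomial_le _).trans ?_
      have := i.2; omega
  apply hf0
  ext x
  rw [hfx]
  have : ∀ i, a i = 0 := by
    intro i
    have hc : p.coeff i = a i := by
      simp only [hp, Polynomial.finsetSum_coeff, Polynomial.coeff_monomial]
      rw [Finset.sum_eq_single i]
      · simp
      · intro b _ hb
        rw [if_neg (fun h => hb (Fin.ext h))]
      · simp
    rw [← hc, hp0, Polynomial.coeff_zero]
  exact Finset.sum_eq_zero fun i _ => by
    have h := this i
    simp only [ha] at h
    rw [h, zero_mul]

lemma modEq_cases {n a b : ℕ} (h : a ≡ b [MOD n]) (ha : a < 2 * n) (hb : b < 2 * n) :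
    a = b ∨ a + n = b ∨ a = b + n := by
  have aux : ∀ c : ℕ, c < 2 * n → c % n = c ∨ c % n + n = c := by
    intro c hc
    by_cases h : c < n
    · left; exact Nat.mod_eq_of_lt h
    · right
      rw [Nat.mod_eq_sub_mod (by omega), Nat.mod_eq_of_lt (by omega)]; omega
  have h1 := aux a ha
  have h2 := aux b hb
  have h3 : a % n = b % n := h
  omega

open Classical in
lemma lower (k h : ℕ) (hn : 2 * (2 * k + 2) < h + h) :
    ∃ P : Set (EuclideanSpace ℝ (Fin (2 * k + 2))), IsCSPolytope P ∧ affineSpan ℝ P = ⊤ ∧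
      (P.extremePoints ℝ).ncard = h + h ∧
      (h + h) * (k * (h + h) / (2 * k + 1)) ≤ faceCount P 1 := by
  set n := h + h with hnn
  have hh : 0 < h := by omega
  have hn0 : 0 < n := by omega
  have hde : Even (2 * k + 2) := ⟨k + 1, by ring⟩
  set p := mpt (2 * k + 2) n with hp
  set V := (Finset.range n).image p with hV
  have hmem : ∀ j, p j ∈ V := fun j => by
    rw [hp, mpt_mod _ _ j hn0]
    exact Finset.mem_image_of_mem _ (Finset.mem_range.2 (Nat.mod_lt _ hn0))
  have hneg : ∀ j, - p j = p (j + h) := fun j => mpt_neg hde h j hh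
  have hVneg : -(V : Set (EuclideanSpace ℝ (Fin (2 * k + 2)))) = V := by
    have hsub : ∀ x ∈ V, -x ∈ V := by
      intro x hx
      obtain ⟨j, -, rfl⟩ := Finset.mem_image.1 hx
      rw [hneg]; exact hmem _
    ext x
    simp only [Set.mem_neg, Finset.mem_coe]
    exact ⟨fun hx => by simpa using hsub _ hx, hsub x⟩
  have hface : ∀ i r, (2 * k + 1) * r ≤ k * n →
      IsExposed ℝ (convexHull ℝ (V : Set (EuclideanSpace ℝ (Fin (2 * k + 2)))))
        (convexHull ℝ {p i, p (i + r)}) ∧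
      ∀ x ∈ V, x ∈ convexHull ℝ ({p i, p (i + r)} : Set (EuclideanSpace ℝ (Fin (2 * k + 2)))) →
        x = p i ∨ x = p (i + r) := by
    intro i r hr
    obtain ⟨l, M, h1, h2, h3⟩ := mpt_face k n i r hn0 hr
    have := face_of_fun V {p i, p (i + r)} (by
        intro x hx
        simp only [Finset.mem_insert, Finset.mem_singleton] at hx
        rcases hx with rfl | rfl <;> exact hmem _) l M
      (by
        intro x hx
        simp only [Finset.mem_insert, Finset.mem_singleton] at hx
        rcases hx with rfl | rfl
        · exact h1
        · exact h2)
      (by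
        intro x hx hxS
        obtain ⟨j, hj, rfl⟩ := Finset.mem_image.1 hx
        simp only [Finset.mem_insert, Finset.mem_singleton, not_or] at hxS
        apply h3 j (Finset.mem_range.1 hj)
        · intro hm; exact hxS.1 ((mpt_eq_iff k n _ _ hn0).2 hm)
        · intro hm; exact hxS.2 ((mpt_eq_iff k n _ _ hn0).2 hm))
      ⟨p i, by simp⟩
    simpa using this
  set P := convexHull ℝ (V : Set (EuclideanSpace ℝ (Fin (2 * k + 2)))) with hP
  have hPk : IsCompact P := V.finite_toSet.isCompact_convexHull ℝ
  have hPc : Convex ℝ P := convex_convexHull ℝ _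
  have hext : P.extremePoints ℝ = V := by
    apply Set.Subset.antisymm
    · exact extremePoints_convexHull_subset (𝕜 := ℝ)
    · intro x hx
      obtain ⟨j, -, rfl⟩ := Finset.mem_image.1 hx
      apply exposedPoints_subset_extremePoints
      rw [mem_exposedPoints_iff_exposed_singleton]
      have := (hface j 0 (by simp)).1
      simpa using this
  refine ⟨P, ⟨⟨V, rfl⟩, ?_⟩, ?_, ?_, ?_⟩
  · rw [hP, ← convexHull_neg, hVneg]
  · rw [hP, affineSpan_convexHull, AffineSubspace.affineSpan_eq_top_iff_vectorSpan_eq_top_of_nonempty]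
    · rw [eq_top_iff, ← mpt_span (2 * k + 2) n (by omega) hn, Submodule.span_le]
      rintro _ ⟨j, rfl⟩
      have h1 : p j -ᵥ (- p j) ∈ vectorSpan ℝ (V : Set (EuclideanSpace ℝ (Fin (2 * k + 2)))) :=
        vsub_mem_vectorSpan ℝ (hmem j) (by rw [hneg]; exact hmem _)
      have h2 := Submodule.smul_mem _ (1/2:ℝ) h1
      convert h2 using 1
      rw [vsub_eq_sub, sub_neg_eq_add, ← two_smul ℝ, smul_smul]
      norm_num [hp]
    · exact ⟨p 0, hmem 0⟩
  · rw [hext, Set.ncard_coe_finset, hV, Finset.card_image_of_injOn, Finset.card_range]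
    intro a ha b hb hab
    have := (mpt_eq_iff k n a b hn0).1 hab
    simp only [Finset.coe_range, Set.mem_Iio] at ha hb
    rcases modEq_cases this (by omega) (by omega) with h | h | h <;> omega
  · have hF := faces_finite hPk hPc (by rw [hext]; exact V.finite_toSet)
    rw [faceCount, Set.ncard_eq_toFinset_card _ hF]
    set R := k * n / (2 * k + 1) with hR
    have hRr : ∀ r ≤ R, (2 * k + 1) * r ≤ k * n := fun r hr =>
      (Nat.mul_le_mul_left _ hr).trans (Nat.mul_div_le _ _)
    have hR2 : ∀ r ≤ R, 2 * r < n := fun r hr => by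
      have := hRr r hr
      by_contra hc
      push Not at hc
      nlinarith
    have hc : (Finset.range n ×ˢ Finset.Icc 1 R).card = n * R := by simp
    rw [← hc]
    apply Finset.card_le_card_of_injOn
      (fun x : ℕ × ℕ => convexHull ℝ ({p x.1, p (x.1 + x.2)} : Set (EuclideanSpace ℝ (Fin (2 * k + 2)))))
    · rintro ⟨i, r⟩ hx
      simp only [Finset.coe_product, Finset.coe_range, Finset.coe_Icc, Set.mem_prod, Set.mem_Iio,
        Set.mem_Icc] at hx
      simp only [Set.Finite.coe_toFinset, Set.mem_ofPred_eq]
      refine ⟨(hface i r (hRr r hx.2.2)).1, ⟨p i, subset_convexHull ℝ _ (by simp)⟩, ?_⟩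
      apply finrank_pair
      intro he
      have h2r := hR2 r hx.2.2
      rcases modEq_cases ((mpt_eq_iff k n _ _ hn0).1 he) (by omega) (by omega) with h | h | h <;> omega
    · rintro ⟨i, r⟩ hx ⟨i', r'⟩ hx' he
      simp only [Finset.coe_product, Finset.coe_range, Finset.coe_Icc, Set.mem_prod, Set.mem_Iio,
        Set.mem_Icc] at hx hx'
      simp only at he
      have h2r := hR2 r hx.2.2
      have h2r' := hR2 r' hx'.2.2
      have e1 := (hface i' r' (hRr r' hx'.2.2)).2 (p i) (hmem _) (by
        rw [← he]; exact subset_convexHull ℝ _ (by simp))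
      have e2 := (hface i' r' (hRr r' hx'.2.2)).2 (p (i + r)) (hmem _) (by
        rw [← he]; exact subset_convexHull ℝ _ (by simp))
      simp only [hp, mpt_eq_iff k n _ _ hn0] at e1 e2
      have f1 : (i = i' ∨ i + n = i' ∨ i = i' + n) ∨ (i = i' + r' ∨ i + n = i' + r' ∨ i = i' + r' + n) :=
        e1.imp (fun h => modEq_cases h (by omega) (by omega)) (fun h => modEq_cases h (by omega) (by omega))
      have f2 : (i + r = i' ∨ i + r + n = i' ∨ i + r = i' + n) ∨
          (i + r = i' + r' ∨ i + r + n = i' + r' ∨ i + r = i' + r' + n) :=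
        e2.imp (fun h => modEq_cases h (by omega) (by omega)) (fun h => modEq_cases h (by omega) (by omega))
      have : i = i' ∧ r = r' := by omega
      rw [this.1, this.2]
lemma fmax_upper {d n : ℕ} (hd : 2 ≤ d) : 2 * 2 ^ d * fmax d n 1 ≤ (2 ^ d - 1) * n ^ 2 := by
  unfold fmax
  set A := {m : ℕ | ∃ P : Set (EuclideanSpace ℝ (Fin d)),
    IsCSPolytope P ∧ affineSpan ℝ P = ⊤ ∧
    (Set.extremePoints ℝ P).ncard = n ∧ faceCount P 1 = m} with hA
  have hall : ∀ m ∈ A, 2 * 2 ^ d * m ≤ (2 ^ d - 1) * n ^ 2 := by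
    rintro m ⟨P, h1, h2, h3, rfl⟩
    exact upper hd h1 h2 h3
  rcases A.eq_empty_or_nonempty with h | h
  · rw [h]; simp
  · apply hall
    apply Nat.sSup_mem h
    refine ⟨(2 ^ d - 1) * n ^ 2, fun m hm => le_trans ?_ (hall m hm)⟩
    exact Nat.le_mul_of_pos_left _ (by positivity)

lemma fmax_ge {d n : ℕ} (hd : 2 ≤ d) {P : Set (EuclideanSpace ℝ (Fin d))} (h1 : IsCSPolytope P)
    (h2 : affineSpan ℝ P = ⊤) (h3 : (Set.extremePoints ℝ P).ncard = n) :
    faceCount P 1 ≤ fmax d n 1 := by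
  unfold fmax
  apply le_csSup
  · refine ⟨(2 ^ d - 1) * n ^ 2, ?_⟩
    rintro m ⟨P, h1, h2, h3, rfl⟩
    exact (Nat.le_mul_of_pos_left _ (by positivity)).trans (upper hd h1 h2 h3)
  · exact ⟨P, h1, h2, h3, rfl⟩

/-- Theorem 1.3: bounds on the maximal number of edges of a cs `d`-polytope. -/
theorem stmt_2 (d : ℕ) (hd : Even d) (hd4 : 4 ≤ d) :
    (∀ ε : ℝ, 0 < ε → ∃ N : ℕ, ∀ n : ℕ, N ≤ n → Even n →
      (((d : ℝ) - 2) / ((d : ℝ) - 1) - ε) * (n.choose 2 : ℝ) ≤ (fmax d n 1 : ℝ)) ∧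
    (∀ n : ℕ, Even n →
      (fmax d n 1 : ℝ) ≤ (1 - (2 : ℝ) ^ (-(d : ℤ))) * (n : ℝ) ^ 2 / 2) := by
  constructor
  · intro ε hε
    obtain ⟨k, rfl⟩ : ∃ k, d = 2 * k + 2 := by
      obtain ⟨r, hr⟩ := hd
      exact ⟨r - 1, by omega⟩
    obtain ⟨N, hN⟩ := exists_nat_gt (1 + 2 / ε)
    refine ⟨max N (2 * (2 * k + 2) + 1), fun n hn he => ?_⟩
    obtain ⟨h, rfl⟩ := he
    have hn1 : N ≤ h + h := (le_max_left _ _).trans hn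
    have hn2 : 2 * (2 * k + 2) < h + h := (le_max_right _ _).trans hn
    obtain ⟨P, h1, h2, h3, h4⟩ := lower k h hn2
    have h5 := h4.trans (fmax_ge (by omega) h1 h2 h3)
    have h6 : ((h + h : ℕ) : ℝ) * ((k * (h + h) / (2 * k + 1) : ℕ) : ℝ) ≤ (fmax (2 * k + 2) (h + h) 1 : ℝ) := by
      exact_mod_cast h5
    refine le_trans ?_ h6
    set n : ℕ := h + h with hnn
    have hm : (0:ℝ) < 2 * k + 1 := by positivity
    have hR : (k * n : ℝ) / (2 * k + 1) - 1 ≤ ((k * n / (2 * k + 1) : ℕ) : ℝ) := by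
      rw [sub_le_iff_le_add, div_le_iff₀ hm]
      have := (Nat.lt_mul_div_succ (k * n) (show 0 < 2 * k + 1 by omega)).le
      have : ((k * n : ℕ) : ℝ) ≤ (((2 * k + 1) * (k * n / (2 * k + 1) + 1) : ℕ) : ℝ) := by
        exact_mod_cast this
      push_cast at this
      push_cast
      linarith
    have hnpos : (0:ℝ) ≤ n := by positivity
    have hnN : 1 + 2 / ε ≤ n := hN.le.trans (by exact_mod_cast hn1)
    have hεn : 2 ≤ ε * (n - 1) := by
      have : 2 / ε ≤ n - 1 := by linarith
      rw [div_le_iff₀ hε] at this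
      linarith
    rw [Nat.cast_choose_two]
    have hfrac : (((2 * k + 2 : ℕ) : ℝ) - 2) / (((2 * k + 2 : ℕ) : ℝ) - 1) = 2 * (k / (2 * k + 1)) := by
      push_cast
      have : (2 * (k:ℝ) + 2 - 1) = 2 * k + 1 := by ring
      rw [this]
      field_simp
      ring
    rw [hfrac]
    have hq : (k * n : ℝ) / (2 * k + 1) = (k / (2 * k + 1)) * n := by ring
    rw [hq] at hR
    set c : ℝ := k / (2 * k + 1) with hc
    have hc0 : 0 ≤ c := by positivity
    calc (2 * c - ε) * ((n:ℝ) * (n - 1) / 2) = n * (c * n - c - ε * (n - 1) / 2) := by ring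
      _ ≤ n * (c * n - 1) := by
        apply mul_le_mul_of_nonneg_left _ hnpos
        linarith
      _ ≤ _ := mul_le_mul_of_nonneg_left hR hnpos
  · intro n _
    have h := fmax_upper (d := d) (n := n) (by omega)
    have h' : (2 * 2 ^ d * fmax d n 1 : ℝ) ≤ (2 ^ d - 1) * n ^ 2 := by
      have h2 : ((2 * 2 ^ d * fmax d n 1 : ℕ) : ℝ) ≤ (((2 ^ d - 1) * n ^ 2 : ℕ) : ℝ) := by
        exact_mod_cast h
      have h1 : 1 ≤ 2 ^ d := Nat.one_le_two_pow
      push_cast [h1] at h2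
      exact h2
    have hp : (0:ℝ) < 2 ^ d := by positivity
    rw [zpow_neg, zpow_natCast]
    have : (1 - ((2:ℝ) ^ d)⁻¹) * (n:ℝ) ^ 2 / 2 = (2 ^ d - 1) * n ^ 2 / (2 * 2 ^ d) := by
      field_simp
    rw [this, le_div_iff₀ (by positivity)]
    linarith
end

section
/- Fix an even integer d = 2k and an integer 1 ≤ j ≤ k−1. Then: (i) for every ε > 0 there exists N such that for all even n ≥ N, fmax(d,n;j) ≥ (2^{−j−1} − ε)·C(n,j+1); and (ii) for all even n, fmax(d,n;j) ≤ (n/(n−1))·(1 − 2^{−d})·C(n,j+1). In particular, fmax(d,n;j)/C(n,j+1) is at least 2^{−j−1} + o(1) and at most 1 − 2^{−d} + o(1) as n → ∞. -/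
open Real

open scoped Pointwise in
open Classical MeasureTheory in
lemma aux_vol {d : ℕ} (U : Set (EuclideanSpace ℝ (Fin d))) (hU : IsOpen U) (hne : U.Nonempty)
    (hfin : volume U ≠ ⊤) (V : Finset (EuclideanSpace ℝ (Fin d)))
    (h : ∀ u ∈ V, ∀ p ∈ U, u + p ∈ (2 : ℝ) • U) :
    ((V.card : ℝ)) ^ 2 ≤ (2 : ℝ) ^ d *
      (((V ×ˢ V).filter (fun q => ¬ Disjoint (q.1 +ᵥ U) (q.2 +ᵥ U))).card : ℝ) := by
  set v := volume.real U with hv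
  have hvpos : 0 < v := by
    rw [hv, measureReal_def]
    exact ENNReal.toReal_pos (hU.measure_pos _ hne).ne' hfin
  have hTo : ∀ u : EuclideanSpace ℝ (Fin d), IsOpen (u +ᵥ U) := fun u => hU.vadd u
  have hTm : ∀ u : EuclideanSpace ℝ (Fin d), MeasurableSet (u +ᵥ U) := fun u => (hTo u).measurableSet
  have hTv : ∀ u : EuclideanSpace ℝ (Fin d), volume (u +ᵥ U) = volume U := fun u => measure_vadd _ _ _
  have hTvr : ∀ u : EuclideanSpace ℝ (Fin d), volume.real (u +ᵥ U) = v := fun u => by rw [measureReal_def, hTv]; rfl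
  have h2o : IsOpen ((2 : ℝ) • U) := hU.smul₀ (by norm_num)
  have h2v : volume ((2 : ℝ) • U) = ENNReal.ofReal (2 ^ d) * volume U := by
    rw [Measure.addHaar_smul]; simp
  have h2vr : volume.real ((2 : ℝ) • U) = 2 ^ d * v := by
    rw [measureReal_def, h2v, ENNReal.toReal_mul, ENNReal.toReal_ofReal (by positivity)]; rfl
  have hI : ∀ A : Set (EuclideanSpace ℝ (Fin d)), MeasurableSet A → volume A ≠ ⊤ →
      Integrable (A.indicator (fun _ => (1 : ℝ))) volume := fun A hA hA' =>
    (integrable_indicator_iff hA).2 (integrableOn_const hA')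
  have hint : ∀ A : Set (EuclideanSpace ℝ (Fin d)), MeasurableSet A →
      ∫ x, A.indicator (fun _ => (1 : ℝ)) x = volume.real A := fun A hA => by
    rw [integral_indicator_const _ hA]; simp
  set c : ℝ := V.card / 2 ^ d with hc
  have hi1 : Integrable (fun x => ∑ q ∈ V ×ˢ V, ((q.1 +ᵥ U) ∩ (q.2 +ᵥ U)).indicator (fun _ => (1 : ℝ)) x)
      volume := integrable_finsetSum _ fun q _ => hI _ ((hTm _).inter (hTm _))
        (ne_top_of_le_ne_top hfin ((measure_mono Set.inter_subset_left).trans (hTv q.1).le))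
  have hi2 : Integrable (fun x => ∑ u ∈ V, (u +ᵥ U).indicator (fun _ => (1 : ℝ)) x) volume :=
    integrable_finsetSum _ fun u _ => hI _ (hTm _) (by rw [hTv]; exact hfin)
  have hi3 : Integrable (((2 : ℝ) • U).indicator (fun _ => (1 : ℝ))) volume :=
    hI _ h2o.measurableSet (by rw [h2v]; exact ENNReal.mul_ne_top ENNReal.ofReal_ne_top hfin)
  have key : 0 ≤ ∫ x, ((∑ q ∈ V ×ˢ V, ((q.1 +ᵥ U) ∩ (q.2 +ᵥ U)).indicator (fun _ => (1 : ℝ)) x)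
      - (2 * c) * (∑ u ∈ V, (u +ᵥ U).indicator (fun _ => (1 : ℝ)) x)
      + c ^ 2 * ((2 : ℝ) • U).indicator (fun _ => (1 : ℝ)) x) := by
    apply integral_nonneg
    intro x
    have e1 : (∑ q ∈ V ×ˢ V, ((q.1 +ᵥ U) ∩ (q.2 +ᵥ U)).indicator (fun _ => (1 : ℝ)) x)
        = (∑ u ∈ V, (u +ᵥ U).indicator (fun _ => (1 : ℝ)) x) ^ 2 := by
      rw [sq, Finset.sum_mul_sum, ← Finset.sum_product']
      refine Finset.sum_congr rfl fun q _ => ?_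
      by_cases h1 : x ∈ q.1 +ᵥ U <;> by_cases h2 : x ∈ q.2 +ᵥ U <;> simp [h1, h2]
    simp only [Pi.zero_apply]
    rw [e1]
    by_cases hx : x ∈ (2 : ℝ) • U
    · rw [Set.indicator_of_mem hx]
      nlinarith [sq_nonneg ((∑ u ∈ V, (u +ᵥ U).indicator (fun _ => (1 : ℝ)) x) - c)]
    · have : (∑ u ∈ V, (u +ᵥ U).indicator (fun _ => (1 : ℝ)) x) = 0 := by
        refine Finset.sum_eq_zero fun u hu => Set.indicator_of_notMem ?_ _
        rintro ⟨p, hp, rfl⟩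
        exact hx (h u hu p hp)
      rw [this, Set.indicator_of_notMem hx]; simp
  have hi12 : Integrable (fun x => (∑ q ∈ V ×ˢ V, ((q.1 +ᵥ U) ∩ (q.2 +ᵥ U)).indicator (fun _ => (1 : ℝ)) x)
      - (2 * c) * (∑ u ∈ V, (u +ᵥ U).indicator (fun _ => (1 : ℝ)) x)) volume :=
    hi1.sub (hi2.const_mul _)
  rw [integral_add hi12 (hi3.const_mul _),
    integral_sub hi1 (hi2.const_mul _), integral_const_mul, integral_const_mul,
    integral_finsetSum _ (fun q _ => hI _ ((hTm _).inter (hTm _))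
        (ne_top_of_le_ne_top hfin ((measure_mono Set.inter_subset_left).trans (hTv q.1).le))),
    integral_finsetSum _ (fun u _ => hI _ (hTm _) (by rw [hTv]; exact hfin)),
    hint _ h2o.measurableSet, h2vr] at key
  have e2 : ∑ u ∈ V, ∫ x, (u +ᵥ U).indicator (fun _ => (1 : ℝ)) x = V.card * v := by
    rw [Finset.sum_congr rfl fun u _ => (hint _ (hTm u)).trans (hTvr u)]; simp
  have e3 : ∑ q ∈ V ×ˢ V, ∫ x, ((q.1 +ᵥ U) ∩ (q.2 +ᵥ U)).indicator (fun _ => (1 : ℝ)) x ≤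
      (((V ×ˢ V).filter (fun q => ¬ Disjoint (q.1 +ᵥ U) (q.2 +ᵥ U))).card : ℝ) * v := by
    rw [Finset.card_filter]
    push_cast
    rw [Finset.sum_mul]
    refine Finset.sum_le_sum fun q _ => ?_
    rw [hint _ ((hTm _).inter (hTm _))]
    by_cases hq : Disjoint (q.1 +ᵥ U) (q.2 +ᵥ U)
    · have hq' := Set.disjoint_iff_inter_eq_empty.1 hq
      simp [hq, hq']
    · rw [if_pos hq, one_mul, ← hTvr q.1]
      exact measureReal_mono Set.inter_subset_left (by rw [hTv]; exact hfin)
  rw [e2] at key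
  set N : ℝ := (((V ×ˢ V).filter (fun q => ¬ Disjoint (q.1 +ᵥ U) (q.2 +ᵥ U))).card : ℝ)
  have e4 : (0 : ℝ) ≤ (N - 2 * c * V.card + c ^ 2 * 2 ^ d) * v := by nlinarith
  have e5 := nonneg_of_mul_nonneg_left e4 hvpos
  have hcc : c * 2 ^ d = V.card := by rw [hc]; field_simp
  have : (0:ℝ) < 2 ^ d := by positivity
  have e6 : 0 ≤ 2 ^ d * (N - 2 * c * V.card + c ^ 2 * 2 ^ d) := by positivity
  nlinarith

lemma aux_hull {d : ℕ} {V F : Set (EuclideanSpace ℝ (Fin d))} (hV : V.Finite)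
    (hF : IsExposed ℝ (convexHull ℝ V) F) :
    F = convexHull ℝ (F.extremePoints ℝ) ∧
      F.extremePoints ℝ ⊆ (convexHull ℝ V).extremePoints ℝ ∩ F := by
  have hs : F.extremePoints ℝ ⊆ (convexHull ℝ V).extremePoints ℝ :=
    hF.isExtreme.extremePoints_subset_extremePoints
  refine ⟨?_, Set.subset_inter hs extremePoints_subset⟩
  have hfin : (F.extremePoints ℝ).Finite :=
    hV.subset (hs.trans extremePoints_convexHull_subset)
  have := closure_convexHull_extremePoints (hF.isCompact (hV.isCompact_convexHull ℝ))
    (hF.convex (convex_convexHull ℝ V))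
  rw [(hfin.isClosed_convexHull ℝ).closure_eq] at this
  exact this.symm

lemma aux_int {d : ℕ} {P : Set (EuclideanSpace ℝ (Fin d))} (l : StrongDual ℝ (EuclideanSpace ℝ (Fin d)))
    (x : EuclideanSpace ℝ (Fin d)) (hx : x ∈ interior P) (h : ∀ y ∈ P, l y ≤ l x) : l = 0 := by
  have : IsLocalMax l x := by
    filter_upwards [mem_interior_iff_mem_nhds.1 hx] with y hy using h y hy
  exact this.hasFDerivAt_eq_zero l.hasFDerivAt

open scoped Pointwise in
lemma aux_disj {d : ℕ} {P F : Set (EuclideanSpace ℝ (Fin d))} (hsym : P = -P)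
    (hF : IsExposed ℝ P F) (hne : F ≠ P) (u w : EuclideanSpace ℝ (Fin d)) (hu : u ∈ F) (hw : w ∈ F) :
    Disjoint (u +ᵥ interior P) ((-w) +ᵥ interior P) := by
  obtain ⟨l, hl⟩ := hF ⟨u, hu⟩
  have hl0 : l ≠ 0 := by
    rintro rfl
    exact hne (by rw [hl]; ext; simp)
  have hmu := hl ▸ hu
  have hmw := hl ▸ hw
  rw [Set.disjoint_left]
  rintro x ⟨p, hp, rfl⟩ ⟨q, hq, hpq⟩
  have hpq : -w + q = u + p := hpq
  have hstrict : ∀ y ∈ interior P, l y < l u := by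
    intro y hy
    refine lt_of_le_of_ne (hmu.2 y (interior_subset hy)) fun he => hl0 (aux_int l y hy fun z hz => ?_)
    rw [he]; exact hmu.2 z hz
  have h1 := hstrict q hq
  have h2 : l (-p) ≤ l u := hmu.2 _ (by rw [hsym]; simpa using interior_subset hp)
  have h3 : l u ≤ l w := hmw.2 u hmu.1
  have := congrArg l hpq
  simp at this h2
  linarith

/-- clique count -/
lemma aux_count {α : Type*} [DecidableEq α] (V : Finset α) (B : Finset (α × α))
    (𝓢 : Finset (Finset α)) (j : ℕ) (hj : 1 ≤ j)
    (h1 : ∀ S ∈ 𝓢, S ⊆ V ∧ S.card = j + 1) (h2 : ∀ S ∈ 𝓢, ∀ u ∈ S, ∀ w ∈ S, u ≠ w → (u, w) ∈ B) :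
    𝓢.card * ((j + 1) * j) ≤ B.card * (V.card - 2).choose (j - 1) := by
  apply Finset.card_mul_le_card_mul (fun (S : Finset α) (q : α × α) => q ∈ S.offDiag)
  · intro S hS
    have : S.offDiag ⊆ Finset.bipartiteAbove (fun (S : Finset α) (q : α × α) => q ∈ S.offDiag) B S := by
      intro q hq
      have hq' := Finset.mem_offDiag.1 hq
      exact Finset.mem_filter.2 ⟨h2 S hS q.1 hq'.1 q.2 hq'.2.1 hq'.2.2, hq⟩
    refine le_trans (le_of_eq ?_) (Finset.card_le_card this)
    rw [Finset.offDiag_card, (h1 S hS).2]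
    rw [Nat.mul_succ]; omega
  · rintro ⟨u, w⟩ _
    by_cases huw : u ≠ w ∧ u ∈ V ∧ w ∈ V
    · obtain ⟨hne, hu, hw⟩ := huw
      have hc : ((V.erase u).erase w).card = V.card - 2 := by
        rw [Finset.card_erase_of_mem (Finset.mem_erase.2 ⟨hne.symm, hw⟩), Finset.card_erase_of_mem hu]
        omega
      rw [← hc, ← Finset.card_powersetCard]
      apply Finset.card_le_card_of_injOn (fun S => (S.erase u).erase w)
      · intro S hS
        obtain ⟨hS, hq⟩ := Finset.mem_filter.1 hS
        obtain ⟨hq1, hq2, _⟩ := Finset.mem_offDiag.1 hq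
        refine Finset.mem_powersetCard.2 ⟨Finset.erase_subset_erase _ (Finset.erase_subset_erase _ (h1 S hS).1), ?_⟩
        rw [Finset.card_erase_of_mem (Finset.mem_erase.2 ⟨hne.symm, hq2⟩), Finset.card_erase_of_mem hq1,
          (h1 S hS).2]
        omega
      · intro S hS S' hS' he
        obtain ⟨_, hq⟩ := Finset.mem_filter.1 hS
        obtain ⟨_, hq'⟩ := Finset.mem_filter.1 hS'
        obtain ⟨hq1, hq2, _⟩ := Finset.mem_offDiag.1 hq
        obtain ⟨hq1', hq2', _⟩ := Finset.mem_offDiag.1 hq'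
        ext x
        have := congrArg (x ∈ ·) he
        simp only [Finset.mem_erase, eq_iff_iff] at this
        by_cases hxu : x = u
        · subst hxu; simp_all
        by_cases hxw : x = w
        · subst hxw; simp_all
        simpa [hxu, hxw] using this
    · rw [Finset.card_eq_zero.2]
      · exact Nat.zero_le _
      · refine Finset.filter_eq_empty_iff.2 fun S hS hq => huw ?_
        obtain ⟨hq1, hq2, h3⟩ := Finset.mem_offDiag.1 hq
        exact ⟨h3, (h1 S hS).1 hq1, (h1 S hS).1 hq2⟩

open scoped Pointwise in
open Classical MeasureTheory in
lemma aux_pairs {d : ℕ} {P : Set (EuclideanSpace ℝ (Fin d))} (hP : IsCSPolytope P)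
    (hspan : affineSpan ℝ P = ⊤) (V : Finset (EuclideanSpace ℝ (Fin d)))
    (hV : (V : Set (EuclideanSpace ℝ (Fin d))) = P.extremePoints ℝ) :
    ((((V ×ˢ V).filter (fun q => Disjoint (q.1 +ᵥ interior P) ((-q.2 : EuclideanSpace ℝ (Fin d)) +ᵥ interior P))).card : ℕ) : ℝ)
      ≤ (V.card : ℝ) ^ 2 * (1 - (2 : ℝ) ^ (-(d : ℤ))) := by
  obtain ⟨⟨V₀, hV₀⟩, hsym⟩ := hP
  have hconv : Convex ℝ P := hV₀ ▸ convex_convexHull ℝ _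
  have hcomp : IsCompact P := hV₀ ▸ V₀.finite_toSet.isCompact_convexHull ℝ
  have hne : (interior P).Nonempty := hconv.interior_nonempty_iff_affineSpan_eq_top.2 hspan
  have hvf : volume (interior P) ≠ ⊤ :=
    ne_top_of_le_ne_top hcomp.measure_lt_top.ne (measure_mono interior_subset)
  have key := aux_vol (interior P) isOpen_interior hne hvf V (by
    intro u hu p hp
    have huP : u ∈ P := extremePoints_subset (hV ▸ hu : u ∈ P.extremePoints ℝ)
    refine ⟨(1/2 : ℝ) • u + (1/2 : ℝ) • p,
      hconv.combo_self_interior_mem_interior huP hp (by norm_num) (by norm_num) (by norm_num), ?_⟩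
    simp only [smul_add, smul_smul]; norm_num)
  have hneg : ∀ w ∈ V, -w ∈ V := by
    intro w hw
    have hw' : w ∈ P.extremePoints ℝ := hV ▸ hw
    have : -w ∈ (-P).extremePoints ℝ := by
      have := image_extremePoints (LinearEquiv.neg ℝ : (EuclideanSpace ℝ (Fin d)) ≃ₗ[ℝ] _) P
      have h2 : (LinearEquiv.neg ℝ : (EuclideanSpace ℝ (Fin d)) ≃ₗ[ℝ] _) '' P = -P := by
        rw [← Set.image_neg_eq_neg]; rfl
      rw [h2] at this
      rw [← this]
      exact ⟨w, hw', rfl⟩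
    rw [← hsym, ← hV] at this
    exact this
  have hbij : ((V ×ˢ V).filter (fun q => ¬ Disjoint (q.1 +ᵥ interior P) (q.2 +ᵥ interior P))).card
      = ((V ×ˢ V).filter (fun q => ¬ Disjoint (q.1 +ᵥ interior P) ((-q.2 : EuclideanSpace ℝ (Fin d)) +ᵥ interior P))).card := by
    refine Finset.card_bij' (fun q _ => (q.1, -q.2)) (fun q _ => (q.1, -q.2)) ?_ ?_ ?_ ?_
    · rintro ⟨a, b⟩ h
      simp only [Finset.mem_filter, Finset.mem_product, neg_neg] at h ⊢
      exact ⟨⟨h.1.1, hneg _ h.1.2⟩, h.2⟩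
    · rintro ⟨a, b⟩ h
      simp only [Finset.mem_filter, Finset.mem_product] at h ⊢
      exact ⟨⟨h.1.1, hneg _ h.1.2⟩, h.2⟩
    · intros; simp
    · intros; simp
  rw [hbij] at key
  have hsum := Finset.card_filter_add_card_filter_not (s := V ×ˢ V)
    (fun q => Disjoint (q.1 +ᵥ interior P) ((-q.2 : EuclideanSpace ℝ (Fin d)) +ᵥ interior P))
  rw [Finset.card_product] at hsum
  have hsum' := congrArg (Nat.cast : ℕ → ℝ) hsum
  push_cast at hsum'
  set A : ℝ := ((((V ×ˢ V).filter (fun q => Disjoint (q.1 +ᵥ interior P) ((-q.2 : EuclideanSpace ℝ (Fin d)) +ᵥ interior P))).card : ℕ) : ℝ)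
  have hp : (0 : ℝ) < 2 ^ d := by positivity
  rw [zpow_neg, zpow_natCast]
  have h3 : (V.card : ℝ) ^ 2 * (2 ^ d)⁻¹ ≤ V.card * V.card - A := by
    rw [← div_eq_mul_inv, div_le_iff₀ hp]
    nlinarith
  nlinarith

open scoped Pointwise in
open Classical in
lemma aux_upper {d j n : ℕ} (hj : 1 ≤ j) (hjd : j < d) {P : Set (EuclideanSpace ℝ (Fin d))}
    (hP : IsCSPolytope P) (hspan : affineSpan ℝ P = ⊤) (hn : (P.extremePoints ℝ).ncard = n) :
    {F : Set (EuclideanSpace ℝ (Fin d)) |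
      IsExposed ℝ P F ∧ F.Nonempty ∧ Module.finrank ℝ (vectorSpan ℝ F) = j}.Finite ∧
    (faceCount P j : ℝ) ≤
        ((n : ℝ) / ((n : ℝ) - 1)) * (1 - (2 : ℝ) ^ (-(d : ℤ))) * (n.choose (j + 1) : ℝ) := by
  have hP' := hP
  obtain ⟨⟨V₀, hV₀⟩, hsym⟩ := hP'
  have hVfin : (P.extremePoints ℝ).Finite :=
    V₀.finite_toSet.subset (by rw [hV₀]; exact extremePoints_convexHull_subset)
  obtain ⟨V, hV⟩ := hVfin.exists_finset_coe
  have hVn : V.card = n := by rw [← hn, ← hV, Set.ncard_coe_finset]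
  set 𝓕 := {F : Set (EuclideanSpace ℝ (Fin d)) |
      IsExposed ℝ P F ∧ F.Nonempty ∧ Module.finrank ℝ (vectorSpan ℝ F) = j} with h𝓕
  have hex : ∀ F ∈ 𝓕, ∃ S : Finset (EuclideanSpace ℝ (Fin d)), S ⊆ V ∧ S.card = j + 1 ∧
      (S : Set (EuclideanSpace ℝ (Fin d))) ⊆ F ∧
      F = P ∩ (affineSpan ℝ (S : Set (EuclideanSpace ℝ (Fin d))) : Set (EuclideanSpace ℝ (Fin d))) := by
    rintro F ⟨hF, hFne, hFd⟩
    obtain ⟨h1, h2⟩ := aux_hull V₀.finite_toSet (hV₀ ▸ hF)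
    rw [← hV₀, ← hV] at h2
    obtain ⟨t, ht, hts, hti⟩ := exists_affineIndependent ℝ (EuclideanSpace ℝ (Fin d)) (F.extremePoints ℝ)
    have htV : t ⊆ V := fun x hx => (h2 (ht hx)).1
    obtain ⟨S, hS⟩ := (V.finite_toSet.subset htV).exists_finset_coe
    subst hS
    have hspanF : affineSpan ℝ (S : Set (EuclideanSpace ℝ (Fin d))) = affineSpan ℝ F := by
      rw [hts]; conv_rhs => rw [h1, affineSpan_convexHull]
    have hSF : (S : Set (EuclideanSpace ℝ (Fin d))) ⊆ F := fun x hx => (h2 (ht hx)).2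
    refine ⟨S, by exact_mod_cast htV, ?_, hSF, ?_⟩
    · have hSne : Nonempty (S : Set (EuclideanSpace ℝ (Fin d))) := by
        rw [Set.nonempty_coe_sort, ← affineSpan_nonempty ℝ, hspanF, affineSpan_nonempty]
        exact hFne
      have := hti.finrank_vectorSpan_add_one
      rw [Subtype.range_coe, ← direction_affineSpan, hspanF, direction_affineSpan, hFd] at this
      simpa using this.symm
    · apply Set.Subset.antisymm
      · intro x hx
        exact ⟨hF.subset hx, by rw [hspanF]; exact subset_affineSpan ℝ F hx⟩
      · rintro x ⟨hxP, hx⟩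
        rw [hspanF] at hx
        obtain ⟨x₀, hx₀⟩ := hFne
        obtain ⟨l, hl⟩ := hF ⟨x₀, hx₀⟩
        have hle : F ⊆ ((AffineSubspace.mk' x₀ (LinearMap.ker l.toLinearMap) :
            AffineSubspace ℝ (EuclideanSpace ℝ (Fin d))) : Set (EuclideanSpace ℝ (Fin d))) := by
          intro y hy
          rw [SetLike.mem_coe, AffineSubspace.mem_mk', LinearMap.mem_ker]
          have a := (hl ▸ hy : y ∈ {x ∈ P | ∀ y ∈ P, l y ≤ l x}).2 x₀ (hF.subset hx₀)
          have b := (hl ▸ hx₀ : x₀ ∈ {x ∈ P | ∀ y ∈ P, l y ≤ l x}).2 y (hF.subset hy)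
          simp; linarith
        have hxm := affineSpan_le.2 hle hx
        rw [AffineSubspace.mem_mk', LinearMap.mem_ker] at hxm
        have hxe : l x = l x₀ := by simp at hxm; linarith
        rw [hl]
        refine ⟨hxP, fun y hy => ?_⟩
        rw [hxe]
        exact (hl ▸ hx₀ : x₀ ∈ {x ∈ P | ∀ y ∈ P, l y ≤ l x}).2 y hy
  choose! f hf using hex
  have hinj : Set.InjOn f 𝓕 := by
    intro F hF F' hF' he
    rw [(hf F hF).2.2.2, (hf F' hF').2.2.2, he]
  have hfin : 𝓕.Finite := by
    refine Set.Finite.of_finite_image ((V.powerset.finite_toSet).subset ?_) hinj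
    rintro _ ⟨F, hF, rfl⟩
    simpa using (hf F hF).1
  refine ⟨hfin, ?_⟩
  set 𝓢 := hfin.toFinset.image f with h𝓢
  have hcard : faceCount P j = 𝓢.card := by
    rw [h𝓢, Finset.card_image_of_injOn (by simpa using hinj), faceCount,
      Set.ncard_eq_toFinset_card _ hfin]
  have hB := aux_pairs hP hspan V hV
  set B := (V ×ˢ V).filter (fun q => Disjoint (q.1 +ᵥ interior P) ((-q.2 : EuclideanSpace ℝ (Fin d)) +ᵥ interior P)) with hBdef
  have hmem : ∀ S ∈ 𝓢, ∃ F ∈ 𝓕, f F = S := by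
    intro S hS
    obtain ⟨F, hF, rfl⟩ := Finset.mem_image.1 hS
    exact ⟨F, by simpa using hF, rfl⟩
  have hcount := aux_count V B 𝓢 j hj (by
      intro S hS
      obtain ⟨F, hF, rfl⟩ := hmem S hS
      exact ⟨(hf F hF).1, (hf F hF).2.1⟩) (by
      intro S hS u hu w hw _
      obtain ⟨F, hF, rfl⟩ := hmem S hS
      refine Finset.mem_filter.2 ⟨Finset.mem_product.2 ⟨(hf F hF).1 hu, (hf F hF).1 hw⟩, ?_⟩
      refine aux_disj hsym hF.1 ?_ u w ((hf F hF).2.2.1 hu) ((hf F hF).2.2.1 hw)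
      rintro rfl
      have := hF.2.2
      rw [← direction_affineSpan, hspan, AffineSubspace.direction_top, finrank_top] at this
      simp at this
      omega)
  rw [hcard]
  rw [hVn] at hB hcount
  have hpow : (0 : ℝ) ≤ 1 - (2 : ℝ) ^ (-(d : ℤ)) := by
    rw [zpow_neg, zpow_natCast, sub_nonneg]
    exact inv_le_one_of_one_le₀ (one_le_pow₀ (by norm_num))
  by_cases hn2 : n < 2
  · have : 𝓢.card = 0 := by
      rw [Finset.card_eq_zero, Finset.eq_empty_iff_forall_notMem]
      intro S hS
      obtain ⟨F, hF, rfl⟩ := hmem S hS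
      have := Finset.card_le_card (hf F hF).1
      rw [(hf F hF).2.1] at this
      omega
    rw [this, Nat.choose_eq_zero_of_lt (by omega : n < j + 1)]
    simp
  push Not at hn2
  obtain ⟨m, rfl⟩ := Nat.exists_eq_add_of_le' hn2
  obtain ⟨i, rfl⟩ := Nat.exists_eq_add_of_le' hj
  have hid : (m + 2).choose (i + 1 + 1) * ((i + 1 + 1) * (i + 1)) = (m + 2) * (m + 1) * m.choose i := by
    have a := Nat.add_one_mul_choose_eq (m + 1) (i + 1)
    have b := Nat.add_one_mul_choose_eq m i
    calc _ = ((m + 1 + 1).choose (i + 1 + 1) * (i + 1 + 1)) * (i + 1) := by ring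
      _ = (m + 2) * ((m + 1).choose (i + 1) * (i + 1)) := by rw [← a]; ring
      _ = _ := by rw [← b]; ring
  simp only [Nat.add_sub_cancel] at hcount
  have hcount' : (𝓢.card : ℝ) * (((i : ℝ) + 1 + 1) * (i + 1)) ≤ B.card * (m.choose i : ℝ) := by exact_mod_cast hcount
  have hid' : ((m + 2).choose (i + 1 + 1) : ℝ) * (((i : ℝ) + 1 + 1) * (i + 1))
    = ((m : ℝ) + 2) * (m + 1) * (m.choose i : ℝ) := by exact_mod_cast hid
  have hpos : (0 : ℝ) < (((i : ℝ) + 1 + 1) * (i + 1)) := by positivity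
  have hm : (0 : ℝ) < (m : ℝ) + 1 := by positivity
  refine le_of_mul_le_mul_right (hcount'.trans ?_) hpos
  rw [mul_assoc _ _ (((i : ℝ) + 1 + 1) * (i + 1)), hid']
  push_cast at hB ⊢
  calc _ ≤ ((m : ℝ) + 2) ^ 2 * (1 - (2 : ℝ) ^ (-(d : ℤ))) * (m.choose i : ℝ) := by gcongr
    _ = _ := by
      have : ((m : ℝ) + 2 - 1) = m + 1 := by ring
      rw [this]; field_simp

/-- the moment curve -/
noncomputable def momC (d : ℕ) (t : ℝ) : EuclideanSpace ℝ (Fin d) :=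
  WithLp.toLp 2 (fun i => t ^ ((i : ℕ) + 1))

lemma aux_poly {d : ℕ} (Q : Polynomial ℝ) (h0 : Q.coeff 0 = 0) (hd : Q.natDegree ≤ d) :
    ∃ l : StrongDual ℝ (EuclideanSpace ℝ (Fin d)), ∀ t, l (momC d t) = Q.eval t := by
  refine ⟨∑ i : Fin d, Q.coeff ((i : ℕ) + 1) • (EuclideanSpace.proj i : StrongDual ℝ (EuclideanSpace ℝ (Fin d))), fun t => ?_⟩
  rw [Polynomial.eval_eq_sum_range' (Nat.lt_succ_of_le hd), Finset.sum_range_succ', h0,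
    Finset.sum_range]
  simp [momC]

lemma aux_functional {d : ℕ} (S : Finset ℝ) (hS : 2 * S.card ≤ d) (hS1 : ∀ s ∈ S, 1 ≤ s ∧ s < 2)
    (hne : S.Nonempty) :
    ∃ l : StrongDual ℝ (EuclideanSpace ℝ (Fin d)), ∀ t, 1 ≤ t → t < 2 →
      0 < l (momC d t) ∧ l (momC d t) ≤ 1 ∧ (l (momC d t) = 1 ↔ t ∈ S) := by
  set Q : Polynomial ℝ := 1 - ∏ s ∈ S, (1 - Polynomial.C s⁻¹ * Polynomial.X) ^ 2 with hQ
  have hev : ∀ t, Q.eval t = 1 - ∏ s ∈ S, (1 - s⁻¹ * t) ^ 2 := by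
    intro t
    simp [hQ, Polynomial.eval_prod]
  obtain ⟨l, hl⟩ := aux_poly (d := d) Q (by
    rw [Polynomial.coeff_zero_eq_eval_zero, hev]; simp) (by
    refine (Polynomial.natDegree_sub_le _ _).trans (max_le (by simp) ?_)
    refine (Polynomial.natDegree_prod_le _ _).trans ?_
    refine (Finset.sum_le_card_nsmul _ _ 2 fun s _ => ?_).trans (by simpa [mul_comm] using hS)
    have : (1 - Polynomial.C s⁻¹ * Polynomial.X : Polynomial ℝ).natDegree ≤ 1 := by
      compute_degree
    exact Polynomial.natDegree_pow_le.trans (by omega))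
  refine ⟨l, fun t h1 h2 => ?_⟩
  rw [hl, hev]
  have hb : ∀ s ∈ S, (1 - s⁻¹ * t) ^ 2 < 1 := by
    intro s hs
    obtain ⟨a, b⟩ := hS1 s hs
    have hs0 : 0 < s := by linarith
    have : 0 < s⁻¹ * t := by positivity
    have : s⁻¹ * t < 2 := by
      rw [inv_mul_lt_iff₀ hs0]; linarith
    nlinarith
  have hprod : ∏ s ∈ S, (1 - s⁻¹ * t) ^ 2 < 1 := by
    obtain ⟨s₀, hs₀⟩ := hne
    rw [← Finset.mul_prod_erase _ _ hs₀]
    have h3 : ∏ s ∈ S.erase s₀, (1 - s⁻¹ * t) ^ 2 ≤ 1 :=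
      Finset.prod_le_one (fun _ _ => sq_nonneg _) fun s hs => (hb s (Finset.mem_of_mem_erase hs)).le
    have h4 := hb s₀ hs₀
    nlinarith [sq_nonneg (1 - s₀⁻¹ * t)]
  have hnn : 0 ≤ ∏ s ∈ S, (1 - s⁻¹ * t) ^ 2 := Finset.prod_nonneg fun _ _ => sq_nonneg _
  refine ⟨by linarith, by linarith, ?_⟩
  rw [sub_eq_self, Finset.prod_eq_zero_iff]
  constructor
  · rintro ⟨s, hs, he⟩
    have hs0 : s ≠ 0 := by have := (hS1 s hs).1; positivity
    have : 1 - s⁻¹ * t = 0 := by simpa using he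
    have : t = s := by field_simp at this; linarith
    rwa [this]
  · intro ht
    refine ⟨t, ht, ?_⟩
    rw [inv_mul_cancel₀ (by positivity)]; simp

lemma aux_li {d : ℕ} (S : Finset ℝ) (hS : S.card ≤ d) (hS1 : ∀ s ∈ S, 1 ≤ s) :
    LinearIndependent ℝ (fun s : S => momC d (s : ℝ)) := by
  rw [Fintype.linearIndependent_iff]
  intro g hg s₀
  obtain ⟨l, hl⟩ := aux_poly (d := d) (Polynomial.X * ∏ s ∈ S.erase s₀, (Polynomial.X - Polynomial.C s))
    (by simp) (by
      refine Polynomial.natDegree_mul_le.trans ?_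
      rw [Polynomial.natDegree_X, Polynomial.natDegree_prod_of_monic _ _ fun s _ => Polynomial.monic_X_sub_C s]
      simp only [Polynomial.natDegree_X_sub_C, Finset.sum_const, smul_eq_mul, mul_one]
      have := Finset.card_pos.2 ⟨_, s₀.2⟩
      rw [Finset.card_erase_of_mem s₀.2]; omega)
  have h := congrArg l hg
  rw [map_sum, Finset.sum_eq_single s₀] at h
  · rw [map_smul, map_zero, hl, smul_eq_mul, mul_eq_zero] at h
    refine h.resolve_right ?_
    have : (s₀ : ℝ) ≠ 0 := by have := hS1 s₀ s₀.2; positivity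
    simp only [Polynomial.eval_mul, Polynomial.eval_X, Polynomial.eval_prod, Polynomial.eval_sub, Polynomial.eval_C]
    refine mul_ne_zero this (Finset.prod_ne_zero_iff.2 fun s hs => sub_ne_zero.2 (Finset.ne_of_mem_erase hs).symm)
  · intro s _ hne
    rw [map_smul, hl, Polynomial.eval_mul, Polynomial.eval_prod,
      Finset.prod_eq_zero (Finset.mem_erase.2 ⟨fun h => hne (Subtype.ext h), s.2⟩) (by simp)]
    simp
  · simp

lemma aux_face {d : ℕ} {V A : Set (EuclideanSpace ℝ (Fin d))} (hV : V.Finite) (hA : A ⊆ V) (hne : A.Nonempty)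
    (l : StrongDual ℝ (EuclideanSpace ℝ (Fin d))) (h1 : ∀ v ∈ V, l v ≤ 1) (h2 : ∀ v ∈ V, (l v = 1 ↔ v ∈ A)) :
    IsExposed ℝ (convexHull ℝ V) (convexHull ℝ A) ∧ ∀ x ∈ convexHull ℝ A, l x = 1 := by
  have hV1 : ∀ x ∈ convexHull ℝ V, l x ≤ 1 := by
    intro x hx
    exact convexHull_min h1 (convex_halfSpace_le l.toLinearMap.isLinear 1) hx
  have hA1 : ∀ x ∈ convexHull ℝ A, l x = 1 := by
    intro x hx
    exact convexHull_min (fun v hv => (h2 v (hA hv)).2 hv) (convex_hyperplane l.toLinearMap.isLinear 1) hx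
  refine ⟨fun _ => ⟨l, ?_⟩, hA1⟩
  obtain ⟨a, ha⟩ := hne
  apply Set.Subset.antisymm
  · intro x hx
    refine ⟨convexHull_mono hA hx, fun y hy => ?_⟩
    rw [hA1 x hx]; exact hV1 y hy
  · have hex : IsExposed ℝ (convexHull ℝ V) {x ∈ convexHull ℝ V | ∀ y ∈ convexHull ℝ V, l y ≤ l x} :=
      fun _ => ⟨l, rfl⟩
    obtain ⟨e1, e2⟩ := aux_hull hV hex
    rw [e1]
    refine convexHull_mono fun x hx => ?_
    obtain ⟨hx1, hx2, hx3⟩ := e2 hx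
    have hxV := extremePoints_convexHull_subset hx1
    refine (h2 x hxV).1 (le_antisymm (h1 x hxV) ?_)
    rw [← (h2 a (hA ha)).2 ha]
    exact hx3 a (subset_convexHull ℝ V (hA ha))

open scoped Pointwise in
open Classical in
lemma aux_lower {k j m : ℕ} (hj : 1 ≤ j) (hjk : j + 1 ≤ k) (hm : 2 * k ≤ m) :
    ∃ P : Set (EuclideanSpace ℝ (Fin (2 * k))), IsCSPolytope P ∧ affineSpan ℝ P = ⊤ ∧
      (P.extremePoints ℝ).ncard = 2 * m ∧ m.choose (j + 1) ≤ faceCount P j := by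
  obtain ⟨T, hT, hTm⟩ := (Set.Ico_infinite (show (1 : ℝ) < 2 by norm_num)).exists_subset_card_eq m
  have hT1 : ∀ t ∈ T, 1 ≤ t ∧ t < 2 := fun t ht => hT ht
  set g := momC (2 * k) with hg
  have hgpos : ∀ t s, 1 ≤ t → 1 ≤ s → g t ≠ - g s := by
    intro t s ht hs h
    have := congrArg (fun x : EuclideanSpace ℝ (Fin (2 * k)) => x ⟨0, by omega⟩) h
    simp [hg, momC] at this
    linarith
  have hginj : Function.Injective g := by
    intro t s h
    have := congrArg (fun x : EuclideanSpace ℝ (Fin (2 * k)) => x ⟨0, by omega⟩) h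
    simpa [hg, momC] using this
  set W := T.image g with hW
  set V := W ∪ W.image (fun x => -x) with hVdef
  have hVmem : ∀ v, v ∈ V ↔ ∃ t ∈ T, v = g t ∨ v = - g t := by
    intro v
    simp only [hVdef, hW, Finset.mem_union, Finset.mem_image]
    grind
  have hVcard : V.card = 2 * m := by
    rw [hVdef, Finset.card_union_of_disjoint, Finset.card_image_of_injective _ neg_injective,
      hW, Finset.card_image_of_injective _ hginj, hTm]
    · ring
    · rw [Finset.disjoint_left]
      intro x hx hx'
      simp only [hW, Finset.mem_image] at hx hx'
      obtain ⟨t, ht, rfl⟩ := hx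
      obtain ⟨_, ⟨s, hs, rfl⟩, he⟩ := hx'
      exact hgpos t s (hT1 t ht).1 (hT1 s hs).1 he.symm
  -- faces
  have hface : ∀ S ⊆ T, S.Nonempty → S.card ≤ k → ∃ l : StrongDual ℝ (EuclideanSpace ℝ (Fin (2 * k))),
      (∀ v ∈ V, l v ≤ 1) ∧ (∀ v ∈ V, (l v = 1 ↔ v ∈ S.image g)) := by
    intro S hST hne hc
    obtain ⟨l, hl⟩ := aux_functional (d := 2 * k) S (by omega) (fun s hs => hT1 s (hST hs)) hne
    refine ⟨l, ?_, ?_⟩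
    · intro v hv
      obtain ⟨t, ht, rfl | rfl⟩ := (hVmem v).1 hv
      · exact (hl t (hT1 t ht).1 (hT1 t ht).2).2.1
      · have := (hl t (hT1 t ht).1 (hT1 t ht).2).1
        rw [map_neg]; linarith
    · intro v hv
      obtain ⟨t, ht, rfl | rfl⟩ := (hVmem v).1 hv
      · rw [(hl t (hT1 t ht).1 (hT1 t ht).2).2.2, Finset.mem_image]
        exact ⟨fun h => ⟨t, h, rfl⟩, fun ⟨s, hs, he⟩ => hginj he ▸ hs⟩
      · have := (hl t (hT1 t ht).1 (hT1 t ht).2).1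
        rw [map_neg, Finset.mem_image]
        refine ⟨fun h => by linarith, ?_⟩
        rintro ⟨s, hs, he⟩
        exact absurd he (hgpos s t (hT1 s (hST hs)).1 (hT1 t ht).1)
  set P := convexHull ℝ (V : Set (EuclideanSpace ℝ (Fin (2 * k)))) with hPdef
  have hVneg : (V : Set (EuclideanSpace ℝ (Fin (2 * k)))) = -V := by
    ext x
    simp only [Set.mem_neg, Finset.mem_coe, hVmem, neg_inj, neg_eq_iff_eq_neg]
    grind
  have hsym : P = -P := by
    rw [hPdef, ← convexHull_neg, ← hVneg]
  have hVfin := V.finite_toSet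
  have hsub : ∀ S ⊆ T, ((S.image g : Finset _) : Set (EuclideanSpace ℝ (Fin (2 * k)))) ⊆ V := by
    intro S hS x hx
    obtain ⟨s, hs, rfl⟩ := Finset.mem_image.1 hx
    exact (hVmem _).2 ⟨s, hS hs, Or.inl rfl⟩
  have hCS : IsCSPolytope P := ⟨⟨V, rfl⟩, hsym⟩
  have hspan : affineSpan ℝ P = ⊤ := by
    obtain ⟨T', hT', hTc⟩ := Finset.exists_subset_card_eq (hTm ▸ hm)
    have hli := aux_li (d := 2 * k) T' hTc.le (fun s hs => (hT1 s (hT' hs)).1)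
    have htop := hli.span_eq_top_of_card_eq_finrank' (by simp [hTc])
    have hkpos : 0 < T'.card := by omega
    obtain ⟨t₀, ht₀⟩ := Finset.card_pos.1 hkpos
    have h0 : (0 : EuclideanSpace ℝ (Fin (2 * k))) ∈ P := by
      have a : g t₀ ∈ P := subset_convexHull ℝ _ ((hVmem _).2 ⟨t₀, hT' ht₀, Or.inl rfl⟩)
      have b : -g t₀ ∈ P := subset_convexHull ℝ _ ((hVmem _).2 ⟨t₀, hT' ht₀, Or.inr rfl⟩)
      have := (convex_convexHull ℝ _) a b (by norm_num : (0:ℝ) ≤ 1/2) (by norm_num : (0:ℝ) ≤ 1/2) (by norm_num)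
      simpa using this
    rw [← Set.insert_eq_of_mem h0, ← SetLike.coe_set_eq, affineSpan_insert_zero]
    have : Submodule.span ℝ P = ⊤ := by
      rw [eq_top_iff, ← htop]
      refine Submodule.span_mono ?_
      rintro _ ⟨s, rfl⟩
      exact subset_convexHull ℝ _ ((hVmem _).2 ⟨s, hT' s.2, Or.inl rfl⟩)
    rw [this]; rfl
  have hext : P.extremePoints ℝ = V := by
    apply Set.Subset.antisymm extremePoints_convexHull_subset
    intro v hv
    have hsing : ∀ l : StrongDual ℝ (EuclideanSpace ℝ (Fin (2 * k))), (∀ w ∈ V, l w ≤ 1) →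
        (∀ w ∈ V, (l w = 1 ↔ w = v)) → v ∈ P.extremePoints ℝ := by
      intro l h1 h2
      have := (aux_face (A := {v}) hVfin (by simpa using hv) ⟨v, rfl⟩ l h1 (by simpa using h2)).1
      rw [convexHull_singleton] at this
      exact isExtreme_singleton.1 this.isExtreme
    obtain ⟨t, ht, hvt⟩ := (hVmem v).1 hv
    obtain ⟨l, h1, h2⟩ := hface {t} (by simpa using ht) (by simp) (by simp; omega)
    have hnegV : ∀ w ∈ V, -w ∈ V := by
      intro w hw
      have hw' : w ∈ -(V : Set (EuclideanSpace ℝ (Fin (2 * k)))) := hVneg ▸ hw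
      simpa using hw'
    rcases hvt with rfl | rfl
    · exact hsing l h1 (by simpa using h2)
    · refine hsing (-l) (fun w hw => ?_) (fun w hw => ?_)
      · have := h1 (-w) (hnegV w hw)
        simpa using this
      · have := h2 (-w) (hnegV w hw)
        simpa [neg_eq_iff_eq_neg] using this
  have hn : (P.extremePoints ℝ).ncard = 2 * m := by
    rw [hext, Set.ncard_coe_finset, hVcard]
  refine ⟨P, hCS, hspan, hn, ?_⟩
  have hfinF := (aux_upper hj (by omega) hCS hspan hn).1
  rw [← hTm, ← Finset.card_powersetCard, faceCount, ← Set.ncard_coe_finset]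
  have hprop : ∀ S ∈ T.powersetCard (j + 1), S ⊆ T ∧ S.Nonempty ∧ S.card ≤ k := by
    intro S hS
    obtain ⟨a, b⟩ := Finset.mem_powersetCard.1 hS
    exact ⟨a, Finset.card_pos.1 (by omega), by omega⟩
  refine Set.ncard_le_ncard_of_injOn (fun S => convexHull ℝ ((S.image g : Finset _) : Set (EuclideanSpace ℝ (Fin (2 * k))))) ?_ ?_ hfinF
  · intro S hS
    obtain ⟨a, b, c⟩ := hprop S hS
    have hc := (Finset.mem_powersetCard.1 hS).2
    obtain ⟨l, h1, h2⟩ := hface S a b c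
    refine ⟨(aux_face hVfin (hsub S a) (by simpa using b) l h1 h2).1, by simpa using b, ?_⟩
    have hli := aux_li (d := 2 * k) S (by omega) (fun s hs => (hT1 s (a hs)).1)
    have hai := hli.affineIndependent
    have : Nonempty S := b.to_subtype
    have hr := hai.finrank_vectorSpan_add_one
    have hrange : Set.range (fun s : S => momC (2 * k) (s : ℝ)) = ((S.image g : Finset _) : Set (EuclideanSpace ℝ (Fin (2 * k)))) := by
      ext x; simp [hg]
    rw [hrange] at hr
    rw [← direction_affineSpan, affineSpan_convexHull, direction_affineSpan]
    simp only [Fintype.card_coe, hc] at hr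
    omega
  · have hle : ∀ S ∈ T.powersetCard (j + 1), ∀ S' ∈ T.powersetCard (j + 1),
        convexHull ℝ ((S.image g : Finset _) : Set (EuclideanSpace ℝ (Fin (2 * k)))) =
        convexHull ℝ ((S'.image g : Finset _) : Set (EuclideanSpace ℝ (Fin (2 * k)))) → S ⊆ S' := by
      intro S hS S' hS' he t ht
      obtain ⟨a, b, c⟩ := hprop S hS
      obtain ⟨a', b', c'⟩ := hprop S' hS'
      obtain ⟨l, h1, h2⟩ := hface S' a' b' c'
      have hx : g t ∈ convexHull ℝ ((S'.image g : Finset _) : Set (EuclideanSpace ℝ (Fin (2 * k)))) := by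
        rw [← he]
        exact subset_convexHull ℝ _ (Finset.mem_coe.2 (Finset.mem_image_of_mem g ht))
      have h3 := (aux_face hVfin (hsub S' a') (by simpa using b') l h1 h2).2 _ hx
      obtain ⟨s, hs, hse⟩ := Finset.mem_image.1 ((h2 _ ((hVmem _).2 ⟨t, a ht, Or.inl rfl⟩)).1 h3)
      exact hginj hse ▸ hs
    intro S hS S' hS' he
    exact (hle S hS S' hS' he).antisymm (hle S' hS' S hS he.symm)

lemma aux_asym (r : ℕ) (ε : ℝ) (hε : 0 < ε) : ∃ N : ℕ, ∀ m : ℕ, N ≤ m →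
    ((2 : ℝ) ^ (-(r : ℤ)) - ε) * ((2 * m).choose r : ℝ) ≤ (m.choose r : ℝ) := by
  obtain ⟨N, hN⟩ := exists_nat_gt ((r : ℝ) * r / ε)
  refine ⟨max N (r + 1), fun m hm => ?_⟩
  have hm1 : N ≤ m := le_of_max_le_left hm
  have hm2 : r + 1 ≤ m := le_of_max_le_right hm
  have hm0 : (0 : ℝ) < m := by exact_mod_cast (by omega : 0 < m)
  have hrm : (r : ℝ) ≤ m := by exact_mod_cast (by omega : r ≤ m)
  have hub : ((2 * m).choose r : ℝ) * r.factorial ≤ (2 * m) ^ r := by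
    have := Nat.descFactorial_le_pow (2 * m) r
    rw [Nat.descFactorial_eq_factorial_mul_choose] at this
    rw [mul_comm]; exact_mod_cast this
  have hlb : ((m : ℝ) - r) ^ r ≤ (m.choose r : ℝ) * r.factorial := by
    have := Nat.pow_sub_le_descFactorial m r
    rw [Nat.descFactorial_eq_factorial_mul_choose] at this
    have h2 : (m - r) ^ r ≤ r.factorial * m.choose r := (Nat.pow_le_pow_left (by omega) r).trans this
    rw [mul_comm]
    have h3 : (((m - r : ℕ) : ℝ)) ^ r ≤ r.factorial * m.choose r := by exact_mod_cast h2
    rwa [Nat.cast_sub (by omega)] at h3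
  have hbern : (1 : ℝ) - ε ≤ (1 - r / m) ^ r := by
    have h1 := one_add_mul_le_pow (a := -((r : ℝ) / m)) (by
      have : (r : ℝ) / m ≤ 1 := (div_le_one hm0).2 hrm
      linarith) r
    have h2 : (r : ℝ) * r / m ≤ ε := by
      rw [div_le_iff₀ hm0]
      rw [div_lt_iff₀ hε] at hN
      have : (N : ℝ) ≤ m := by exact_mod_cast hm1
      nlinarith
    have h3 : (r : ℝ) * (-((r : ℝ) / m)) = - (r * r / m) := by ring
    rw [h3] at h1
    have : (1 : ℝ) + -((r : ℝ) / m) = 1 - r / m := by ring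
    rw [this] at h1
    linarith
  have hfac : (0 : ℝ) < r.factorial := by exact_mod_cast r.factorial_pos
  have hz : (2 : ℝ) ^ (-(r : ℤ)) = ((2 : ℝ) ^ r)⁻¹ := by rw [zpow_neg, zpow_natCast]
  have hz1 : (2 : ℝ) ^ (-(r : ℤ)) ≤ 1 := by
    rw [hz]; exact inv_le_one_of_one_le₀ (one_le_pow₀ (by norm_num))
  have hz0 : (0 : ℝ) < (2 : ℝ) ^ (-(r : ℤ)) := by positivity
  by_cases hneg : (2 : ℝ) ^ (-(r : ℤ)) - ε ≤ 0
  · exact (mul_nonpos_of_nonpos_of_nonneg hneg (by positivity)).trans (by positivity)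
  push Not at hneg
  refine le_of_mul_le_mul_right ?_ hfac
  calc _ = ((2 : ℝ) ^ (-(r : ℤ)) - ε) * (((2 * m).choose r : ℝ) * r.factorial) := by ring
    _ ≤ ((2 : ℝ) ^ (-(r : ℤ)) - ε) * (2 * m) ^ r := by gcongr
    _ ≤ ((2 : ℝ) ^ (-(r : ℤ)) * (1 - ε)) * (2 * m) ^ r := by gcongr; nlinarith
    _ = (1 - ε) * m ^ r := by rw [hz, mul_pow]; field_simp
    _ ≤ (1 - r / m) ^ r * m ^ r := by gcongr
    _ = ((m : ℝ) - r) ^ r := by rw [← mul_pow]; congr 1; field_simp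
    _ ≤ _ := hlb

/-- Theorem 1.4: bounds on the maximal number of `j`-faces of a cs `2k`-polytope,
for `1 ≤ j ≤ k-1`, with lower-bound constant `c_j(d) = 2^{-j-1}`. -/
theorem stmt_3 (k j : ℕ) (hk : 0 < k) (hj1 : 1 ≤ j) (hjk : j ≤ k - 1) :
    (∀ ε : ℝ, 0 < ε → ∃ N : ℕ, ∀ n : ℕ, N ≤ n → Even n →
      ((2 : ℝ) ^ (-(j : ℤ) - 1) - ε) * (n.choose (j + 1) : ℝ) ≤ (fmax (2 * k) n j : ℝ)) ∧
    (∀ n : ℕ, Even n →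
      (fmax (2 * k) n j : ℝ) ≤
        ((n : ℝ) / ((n : ℝ) - 1)) * (1 - (2 : ℝ) ^ (-(2 * k : ℤ))) * (n.choose (j + 1) : ℝ)) := by
  have hub : ∀ n : ℕ, ∀ m ∈ {m : ℕ | ∃ P : Set (EuclideanSpace ℝ (Fin (2 * k))),
      IsCSPolytope P ∧ affineSpan ℝ P = ⊤ ∧
      (Set.extremePoints ℝ P).ncard = n ∧ faceCount P j = m}, (m : ℝ) ≤
        ((n : ℝ) / ((n : ℝ) - 1)) * (1 - (2 : ℝ) ^ (-(2 * k : ℤ))) * (n.choose (j + 1) : ℝ) := by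
    rintro n m ⟨P, hP, hs, hn, rfl⟩
    have := (aux_upper hj1 (by omega : j < 2 * k) hP hs hn).2
    exact_mod_cast this
  have hbdd : ∀ n : ℕ, BddAbove {m : ℕ | ∃ P : Set (EuclideanSpace ℝ (Fin (2 * k))),
      IsCSPolytope P ∧ affineSpan ℝ P = ⊤ ∧
      (Set.extremePoints ℝ P).ncard = n ∧ faceCount P j = m} := fun n =>
    ⟨⌊((n : ℝ) / ((n : ℝ) - 1)) * (1 - (2 : ℝ) ^ (-(2 * k : ℤ))) * (n.choose (j + 1) : ℝ)⌋₊,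
      fun m hm => Nat.le_floor (hub n m hm)⟩
  constructor
  · intro ε hε
    obtain ⟨N, hN⟩ := aux_asym (j + 1) ε hε
    refine ⟨2 * N + 4 * k, ?_⟩
    rintro n hn ⟨m, rfl⟩
    rw [← two_mul] at hn ⊢
    obtain ⟨P, hP, hs, hc, hf⟩ := aux_lower (k := k) (j := j) (m := m) hj1 (by omega) (by omega)
    have h1 : faceCount P j ≤ fmax (2 * k) (2 * m) j :=
      le_csSup (hbdd (2 * m)) ⟨P, hP, hs, hc, rfl⟩
    have h2 := hN m (by omega)
    have h3 : (-(j : ℤ) - 1) = -((j + 1 : ℕ) : ℤ) := by push_cast; ring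
    rw [h3]
    refine h2.trans ?_
    exact_mod_cast hf.trans h1
  · intro n hn
    rcases Set.eq_empty_or_nonempty {m : ℕ | ∃ P : Set (EuclideanSpace ℝ (Fin (2 * k))),
      IsCSPolytope P ∧ affineSpan ℝ P = ⊤ ∧
      (Set.extremePoints ℝ P).ncard = n ∧ faceCount P j = m} with he | hne
    · have h0 : fmax (2 * k) n j = 0 := by rw [fmax, he]; simp
      rw [h0]
      have hpow : (0 : ℝ) ≤ 1 - (2 : ℝ) ^ (-(2 * k : ℤ)) := by
        rw [sub_nonneg]
        exact zpow_le_one_of_nonpos₀ (by norm_num) (by omega)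
      have hfrac : (0 : ℝ) ≤ (n : ℝ) / ((n : ℝ) - 1) := by
        rcases Nat.eq_zero_or_pos n with rfl | hpos
        · simp
        · have : (1 : ℝ) ≤ n := by exact_mod_cast hpos
          exact div_nonneg (by positivity) (by linarith)
      rw [Nat.cast_zero]
      positivity
    · exact hub n _ (Nat.sSup_mem hne (hbdd n))
end

section
/- Let P ⊂ ℝ^d be a centrally symmetric d-dimensional polytope with n vertices. Then the number of edges of P satisfies f_1(P) ≤ (n²/2)·(1 − 2^{−d}). -/
open Real

open scoped Pointwise in
theorem aux_vol_s4 {d : ℕ} (Q : Set (EuclideanSpace ℝ (Fin d))) (hQo : IsOpen Q)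
    (hQne : Q.Nonempty) (hQb : Bornology.IsBounded Q)
    (V : Finset (EuclideanSpace ℝ (Fin d)))
    (hV : ∀ u ∈ V, ∀ q ∈ Q, ∃ y ∈ Q, u + q = (2:ℝ) • y)
    (N : Finset (EuclideanSpace ℝ (Fin d) × EuclideanSpace ℝ (Fin d)))
    (hN : ∀ u ∈ V, ∀ w ∈ V, ∀ q ∈ Q, ∀ q' ∈ Q, u + q = w + q' → (u, w) ∈ N)
    : (V.card : ℝ)^2 ≤ 2^d * (N.card : ℝ) := by
  classical
  set μ : MeasureTheory.Measure (EuclideanSpace ℝ (Fin d)) := MeasureTheory.volume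
  have hfin : μ Q ≠ ⊤ := hQb.measure_lt_top.ne
  set v : ℝ := μ.real Q with hv
  have hvpos : 0 < v := ENNReal.toReal_pos (hQo.measure_pos μ hQne).ne' hfin
  let A : EuclideanSpace ℝ (Fin d) → Set (EuclideanSpace ℝ (Fin d)) := fun u => (fun x => u + x) '' Q
  let B : Set (EuclideanSpace ℝ (Fin d)) := (2:ℝ) • Q
  have hAo : ∀ u, IsOpen (A u) := fun u => (isOpenMap_add_left u) _ hQo
  have hBo : IsOpen B := hQo.smul₀ two_ne_zero
  have hAm : ∀ u, μ (A u) = μ Q := by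
    intro u
    simp only [A, Set.image_add_left, MeasureTheory.measure_preimage_add]
  have hAr : ∀ u, μ.real (A u) = v := fun u => by simp [MeasureTheory.measureReal_def, hAm, hv]
  have hBm : μ B = ENNReal.ofReal (2^d) * μ Q := by
    simp only [B, μ, MeasureTheory.Measure.addHaar_smul]
    simp
  have hBr : μ.real B = 2^d * v := by
    simp [MeasureTheory.measureReal_def, hBm, hv]
  have hAB : ∀ u ∈ V, A u ⊆ B := by
    rintro u hu _ ⟨q, hq, rfl⟩
    obtain ⟨y, hy, h⟩ := hV u hu q hq
    exact ⟨y, hy, h.symm⟩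
  have hI : ∀ S : Set (EuclideanSpace ℝ (Fin d)), IsOpen S → μ S ≠ ⊤ →
      MeasureTheory.Integrable (S.indicator (fun _ => (1:ℝ))) μ := by
    intro S hS hS'
    exact (MeasureTheory.integrable_indicator_iff hS.measurableSet).2
      (MeasureTheory.integrableOn_const hS')
  have hInt : ∀ S : Set (EuclideanSpace ℝ (Fin d)), IsOpen S →
      ∫ x, S.indicator (fun _ => (1:ℝ)) x ∂μ = μ.real S := by
    intro S hS
    rw [MeasureTheory.integral_indicator hS.measurableSet]
    simp
  have hIA : ∀ u, MeasureTheory.Integrable ((A u).indicator (fun _ => (1:ℝ))) μ :=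
    fun u => hI _ (hAo u) (by rw [hAm]; exact hfin)
  have hIAA : ∀ u w, MeasureTheory.Integrable ((A u ∩ A w).indicator (fun _ => (1:ℝ))) μ :=
    fun u w => hI _ ((hAo u).inter (hAo w))
      (ne_top_of_le_ne_top (by rw [hAm u]; exact hfin) (MeasureTheory.measure_mono Set.inter_subset_left))
  have hIB : MeasureTheory.Integrable (B.indicator (fun _ => (1:ℝ))) μ :=
    hI _ hBo (by rw [hBm]; exact ENNReal.mul_ne_top ENNReal.ofReal_ne_top hfin)
  set c : ℝ := V.card / 2^d with hc
  have key : 0 ≤ ∫ x, ((∑ p ∈ V ×ˢ V, (A p.1 ∩ A p.2).indicator (fun _ => (1:ℝ)) x)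
      - (2*c) * (∑ u ∈ V, (A u).indicator (fun _ => (1:ℝ)) x)
      + c^2 * B.indicator (fun _ => (1:ℝ)) x) ∂μ := by
    apply MeasureTheory.integral_nonneg
    intro x
    have h1 : (∑ p ∈ V ×ˢ V, (A p.1 ∩ A p.2).indicator (fun _ => (1:ℝ)) x)
        = (∑ u ∈ V, (A u).indicator (fun _ => (1:ℝ)) x)^2 := by
      rw [sq, Finset.sum_mul_sum, Finset.sum_product]
      refine Finset.sum_congr rfl fun u _ => Finset.sum_congr rfl fun w _ => ?_
      by_cases h1 : x ∈ A u <;> by_cases h2 : x ∈ A w <;>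
        simp only [Set.indicator_apply, Set.mem_inter_iff, h1, h2] <;> norm_num
    show (0:ℝ) ≤ _
    simp only [h1]
    by_cases hx : x ∈ B
    · simp only [Set.indicator_of_mem hx]
      nlinarith [sq_nonneg ((∑ u ∈ V, (A u).indicator (fun _ => (1:ℝ)) x) - c)]
    · have : (∑ u ∈ V, (A u).indicator (fun _ => (1:ℝ)) x) = 0 :=
        Finset.sum_eq_zero fun u hu => Set.indicator_of_notMem (fun h => hx (hAB u hu h)) _
      simp [this, hx]
  rw [MeasureTheory.integral_add, MeasureTheory.integral_sub, MeasureTheory.integral_const_mul,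
    MeasureTheory.integral_const_mul, MeasureTheory.integral_finsetSum, MeasureTheory.integral_finsetSum,
    hInt B hBo, hBr] at key
  rotate_left
  · exact fun u _ => hIA u
  · exact fun u _ => hIAA _ _
  · exact MeasureTheory.integrable_finsetSum _ fun u _ => hIAA _ _
  · exact (MeasureTheory.integrable_finsetSum _ fun u _ => hIA _).const_mul _
  · exact (MeasureTheory.integrable_finsetSum _ fun u _ => hIAA _ _).sub
      ((MeasureTheory.integrable_finsetSum _ fun u _ => hIA _).const_mul _)
  · exact hIB.const_mul _
  have h2 : ∑ u ∈ V, ∫ x, (A u).indicator (fun _ => (1:ℝ)) x ∂μ = V.card * v := by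
    simp [hInt _ (hAo _), hAr]
  have h3 : ∑ p ∈ V ×ˢ V, ∫ x, (A p.1 ∩ A p.2).indicator (fun _ => (1:ℝ)) x ∂μ ≤ N.card * v := by
    have : ∀ p ∈ V ×ˢ V, ∫ x, (A p.1 ∩ A p.2).indicator (fun _ => (1:ℝ)) x ∂μ
        ≤ if p ∈ N then v else 0 := by
      intro p hp
      rw [hInt _ ((hAo _).inter (hAo _))]
      split_ifs with h
      · rw [← hAr p.1]
        exact MeasureTheory.measureReal_mono Set.inter_subset_left (by rw [hAm]; exact hfin)
      · have : A p.1 ∩ A p.2 = ∅ := by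
          rw [Set.eq_empty_iff_forall_notMem]
          rintro x ⟨⟨q, hq, e1⟩, ⟨q', hq', e2⟩⟩
          rw [Finset.mem_product] at hp
          exact h (hN p.1 hp.1 p.2 hp.2 q hq q' hq' (e1.trans e2.symm))
        simp [this]
    refine (Finset.sum_le_sum this).trans ?_
    rw [← Finset.sum_filter, Finset.sum_const, nsmul_eq_mul]
    gcongr
    intro p hp
    exact (Finset.mem_filter.1 hp).2
  rw [h2] at key
  have h4 : 0 ≤ (N.card - V.card^2/2^d) * v := by
    have : (2:ℝ)^d ≠ 0 := by positivity
    calc (0:ℝ) ≤ _ := key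
      _ ≤ N.card * v - 2 * c * (V.card * v) + c^2 * (2^d * v) := by gcongr
      _ = _ := by rw [hc]; field_simp; ring
  have h5 := nonneg_of_mul_nonneg_left h4 hvpos
  have : (V.card:ℝ)^2/2^d ≤ N.card := by linarith
  rwa [div_le_iff₀' (by positivity)] at this

theorem aux_face_eq {d : ℕ} {P F G : Set (EuclideanSpace ℝ (Fin d))}
    (hF : IsExposed ℝ P F) (hFn : F.Nonempty) (hG : IsExposed ℝ P G)
    (hF1 : Module.finrank ℝ (vectorSpan ℝ F) = 1)
    {u w : EuclideanSpace ℝ (Fin d)} (huw : u ≠ w) (huF : u ∈ F) (hwF : w ∈ F)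
    (huG : u ∈ G) (hwG : w ∈ G) : F ⊆ G := by
  intro x hx
  obtain ⟨l, rfl⟩ := hG ⟨u, huG⟩
  refine ⟨hF.subset hx, fun y hy => ?_⟩
  have h1 : l u = l w := le_antisymm (hwG.2 u huG.1) (huG.2 w hwG.1)
  have hne : (⟨w -ᵥ u, vsub_mem_vectorSpan ℝ hwF huF⟩ : vectorSpan ℝ F) ≠ 0 := by
    intro h
    have := congrArg Subtype.val h
    exact huw (vsub_eq_zero_iff_eq.1 this).symm
  obtain ⟨c, hc⟩ := (finrank_eq_one_iff_of_nonzero' _ hne).1 hF1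
    ⟨x -ᵥ u, vsub_mem_vectorSpan ℝ hx huF⟩
  have h2 := congrArg Subtype.val hc
  have h3 : c • (w - u) = x - u := h2
  have h4 := congrArg l h3
  simp only [map_smul, map_sub, h1, sub_self, smul_zero] at h4
  have := huG.2 y hy
  linarith

theorem aux_two {d : ℕ} {P F : Set (EuclideanSpace ℝ (Fin d))}
    (hPc : IsCompact P) (hPx : Convex ℝ P)
    (hF : IsExposed ℝ P F) (hFn : F.Nonempty)
    (hF1 : Module.finrank ℝ (vectorSpan ℝ F) = 1) :
    ∃ u ∈ Set.extremePoints ℝ P, ∃ w ∈ Set.extremePoints ℝ P, u ∈ F ∧ w ∈ F ∧ u ≠ w := by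
  have hsub : Set.extremePoints ℝ F ⊆ Set.extremePoints ℝ P := hF.isExtreme.extremePoints_subset_extremePoints
  have hkm := closure_convexHull_extremePoints (hF.isCompact hPc) (hF.convex hPx)
  by_contra hcon
  have hss : (Set.extremePoints ℝ F).Subsingleton := by
    intro u hu w hw
    by_contra h
    exact hcon ⟨u, hsub hu, w, hsub hw, hu.1, hw.1, h⟩
  have : F.Subsingleton := by
    rw [← hkm]
    rcases hss.eq_empty_or_singleton with h | ⟨a, h⟩ <;> simp [h]
  rw [(vectorSpan_eq_bot_iff_subsingleton ℝ).2 this] at hF1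
  simp at hF1

/-- Proposition 2.1: a cs `d`-polytope with `n` vertices has at most
`(n²/2)(1 - 2^{-d})` edges. -/
theorem stmt_4 (d n : ℕ) (P : Set (EuclideanSpace ℝ (Fin d)))
    (hP : IsCSPolytope P) (hdim : affineSpan ℝ P = ⊤)
    (hn : (Set.extremePoints ℝ P).ncard = n) :
    (faceCount P 1 : ℝ) ≤ (n : ℝ) ^ 2 / 2 * (1 - (2 : ℝ) ^ (-(d : ℤ))) := by
  classical
  obtain ⟨⟨V0, hV0⟩, hsym⟩ := hP
  have hPx : Convex ℝ P := hV0 ▸ convex_convexHull ℝ _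
  have hPc : IsCompact P := hV0 ▸ V0.finite_toSet.isCompact_convexHull (𝕜 := ℝ)
  have hext : (Set.extremePoints ℝ P).Finite := by
    rw [hV0]; exact V0.finite_toSet.subset extremePoints_convexHull_subset
  have hneg : ∀ x ∈ P, -x ∈ P := fun x hx => by rw [hsym] at hx; exact hx
  have hnegE : ∀ x ∈ Set.extremePoints ℝ P, -x ∈ Set.extremePoints ℝ P := by
    intro x hx
    refine ⟨hneg x hx.1, fun a ha b hb hab => ?_⟩
    have : x ∈ openSegment ℝ (-a) (-b) := by
      obtain ⟨s, t, hs, ht, hst, h⟩ := hab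
      refine ⟨s, t, hs, ht, hst, ?_⟩
      rw [smul_neg, smul_neg, ← neg_add, h, neg_neg]
    have h := hx.2 (hneg a ha) (hneg b hb) this
    rw [← h, neg_neg]
  have hspan : vectorSpan ℝ P = ⊤ := by
    rw [← direction_affineSpan, hdim, AffineSubspace.direction_top]
  obtain ⟨V, hVn, hVm⟩ : ∃ V : Finset (EuclideanSpace ℝ (Fin d)), V.card = n ∧
      ∀ x, x ∈ V ↔ x ∈ Set.extremePoints ℝ P :=
    ⟨hext.toFinset, by rw [← hn, Set.ncard_eq_toFinset_card _ hext], by simp⟩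
  have hrhs : (0:ℝ) ≤ 1 - (2 : ℝ) ^ (-(d : ℤ)) := by
    rw [zpow_neg, zpow_natCast, sub_nonneg]
    exact inv_le_one_of_one_le₀ (one_le_pow₀ (by norm_num))
  unfold faceCount
  set S := {F : Set (EuclideanSpace ℝ (Fin d)) |
    IsExposed ℝ P F ∧ F.Nonempty ∧ Module.finrank ℝ (vectorSpan ℝ F) = 1} with hS
  by_cases hSf : S.Finite
  swap
  · rw [Set.Infinite.ncard hSf]
    push_cast
    positivity
  have hzero : ∀ F ∈ S, F ≠ P → ∃ l : EuclideanSpace ℝ (Fin d) →L[ℝ] ℝ, l ≠ 0 ∧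
      F = {x ∈ P | ∀ y ∈ P, l y ≤ l x} := by
    rintro F ⟨hF, hFn, -⟩ hne
    obtain ⟨l, hl⟩ := hF hFn
    refine ⟨l, ?_, hl⟩
    rintro rfl
    apply hne
    rw [hl]; simp
  have htwo : ∀ F ∈ S, ∃ u ∈ V, ∃ w ∈ V, u ∈ F ∧ w ∈ F ∧ u ≠ w := by
    rintro F ⟨h1, h2, h3⟩
    obtain ⟨u, hu, w, hw, h⟩ := aux_two hPc hPx h1 h2 h3
    exact ⟨u, (hVm u).2 hu, w, (hVm w).2 hw, h⟩
  by_cases hd : d = 1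
  · subst hd
    have hSP : S ⊆ {P} := by
      intro F hF
      by_contra hne
      obtain ⟨l, hl, hFl⟩ := hzero F hF hne
      obtain ⟨u, hu, w, hw, huF, hwF, huw⟩ := htwo F hF
      rw [hFl] at huF hwF
      have h1 : l u = l w := le_antisymm (hwF.2 u huF.1) (huF.2 w hwF.1)
      apply hl
      ext x
      have hne : w - u ≠ 0 := sub_ne_zero.2 huw.symm
      have hfr : Module.finrank ℝ (EuclideanSpace ℝ (Fin 1)) = 1 := by simp
      obtain ⟨c, hc⟩ := (finrank_eq_one_iff_of_nonzero' _ hne).1 hfr x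
      rw [← hc]; simp [h1]
    rcases S.eq_empty_or_nonempty with h | ⟨F, hF⟩
    · rw [h]; simp only [Set.ncard_empty]; push_cast; positivity
    · obtain ⟨u, hu, w, hw, huF, hwF, huw⟩ := htwo F hF
      have h2 : 2 ≤ n := by
        rw [← hVn]
        exact Finset.one_lt_card.2 ⟨u, hu, w, hw, huw⟩
      have h3 : S.ncard ≤ 1 := (Set.ncard_le_ncard hSP).trans (by simp)
      have h2' : (2:ℝ) ≤ n := by exact_mod_cast h2
      have h3' : (S.ncard:ℝ) ≤ 1 := by exact_mod_cast h3
      norm_num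
      nlinarith
  -- main case
  set Q := interior P with hQ
  have hQne : Q.Nonempty := hPx.interior_nonempty_iff_affineSpan_eq_top.2 hdim
  have hQx : Convex ℝ Q := hPx.interior
  have hQneg : ∀ q ∈ Q, -q ∈ Q := by
    intro q hq
    rw [hQ, mem_interior] at hq
    obtain ⟨t, ht, hto, hqt⟩ := hq
    rw [hQ, mem_interior]
    refine ⟨(fun x => -x) ⁻¹' t, fun x hx => ?_, hto.preimage continuous_neg, ?_⟩
    · have := hneg _ (ht hx)
      rwa [neg_neg] at this
    · show - -q ∈ t
      rwa [neg_neg]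
  let N := (V ×ˢ V).filter (fun p => (1/2:ℝ) • (p.1 - p.2) ∈ Q)
  have hmain := aux_vol_s4 Q isOpen_interior hQne (hPc.isBounded.subset interior_subset) V
    (by
      intro u hu q hq
      refine ⟨(1/2:ℝ) • u + (1/2:ℝ) • q, ?_, ?_⟩
      · exact hPx.combo_self_interior_mem_interior ((hVm u).1 hu).1 hq (by norm_num) (by norm_num) (by norm_num)
      · module) N
    (by
      intro u hu w hw q hq q' hq' h
      refine Finset.mem_filter.2 ⟨Finset.mk_mem_product hu hw, ?_⟩
      have : (1/2:ℝ) • (u - w) = (1/2:ℝ) • q' + (1/2:ℝ) • (-q) := by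
        have : u - w = q' - q := by rw [sub_eq_sub_iff_add_eq_add, h, add_comm]
        rw [this]; module
      show (1/2:ℝ) • (u - w) ∈ Q
      rw [this]
      exact hQx hq' (hQneg q hq) (by norm_num) (by norm_num) (by norm_num))
  let M := (V ×ˢ V).filter (fun p => (1/2:ℝ) • (p.1 + p.2) ∈ Q)
  have hNM : N.card ≤ M.card := by
    refine Finset.card_le_card_of_injOn (fun p => (p.1, -p.2)) ?_ ?_
    · rintro ⟨u, w⟩ hp
      simp only [N, Finset.coe_filter, Set.mem_ofPred_eq, Finset.mem_product] at hp
      simp only [M, Finset.coe_filter, Set.mem_ofPred_eq, Finset.mem_product]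
      refine ⟨⟨hp.1.1, ?_⟩, ?_⟩
      · rw [hVm]; exact hnegE _ ((hVm _).1 hp.1.2)
      · rw [← sub_eq_add_neg]; exact hp.2
    · rintro ⟨a, b⟩ _ ⟨a', b'⟩ _ h
      simpa using h
  let E : Set (EuclideanSpace ℝ (Fin d)) → Finset (EuclideanSpace ℝ (Fin d) × EuclideanSpace ℝ (Fin d)) :=
    fun F => (V ×ˢ V).filter (fun p => p.1 ∈ F ∧ p.2 ∈ F ∧ p.1 ≠ p.2)
  have hE2 : ∀ F ∈ hSf.toFinset, 2 ≤ (E F).card := by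
    intro F hF
    obtain ⟨u, hu, w, hw, huF, hwF, huw⟩ := htwo F (hSf.mem_toFinset.1 hF)
    refine Finset.one_lt_card.2 ⟨(u, w), ?_, (w, u), ?_, ?_⟩
    · exact Finset.mem_filter.2 ⟨Finset.mk_mem_product hu hw, huF, hwF, huw⟩
    · exact Finset.mem_filter.2 ⟨Finset.mk_mem_product hw hu, hwF, huF, huw.symm⟩
    · simp [huw]
  have hdisj : (hSf.toFinset : Set (Set (EuclideanSpace ℝ (Fin d)))).PairwiseDisjoint E := by
    intro F hF G hG hne
    have hF' : F ∈ S := by simpa using hF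
    have hG' : G ∈ S := by simpa using hG
    refine Finset.disjoint_left.2 ?_
    rintro ⟨u, w⟩ h1 h2
    simp only [E, Finset.mem_filter] at h1 h2
    obtain ⟨-, a1, a2, a3⟩ := h1
    obtain ⟨-, b1, b2, b3⟩ := h2
    exact hne (Set.Subset.antisymm
      (aux_face_eq hF'.1 hF'.2.1 hG'.1 hF'.2.2 a3 a1 a2 b1 b2)
      (aux_face_eq hG'.1 hG'.2.1 hF'.1 hG'.2.2 a3 b1 b2 a1 a2))
  have hdis2 : Disjoint (hSf.toFinset.biUnion E) M := by
    refine Finset.disjoint_left.2 ?_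
    rintro ⟨u, w⟩ h1 h2
    obtain ⟨F, hF, h1⟩ := Finset.mem_biUnion.1 h1
    have hF' : F ∈ S := by simpa using hF
    simp only [E, M, Finset.mem_filter] at h1 h2
    obtain ⟨-, a1, a2, a3⟩ := h1
    have hFP : F ≠ P := by
      rintro rfl
      have := hF'.2.2
      rw [hspan] at this
      simp at this
      exact hd this
    obtain ⟨l, hl, hFl⟩ := hzero F hF' hFP
    rw [hFl] at a1 a2
    have h1 : l u = l w := le_antisymm (a2.2 u a1.1) (a1.2 w a2.1)
    set m := (1/2:ℝ) • (u + w) with hm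
    have hlm : l m = l u := by
      rw [hm, map_smul, map_add, h1, smul_eq_mul]; ring
    have hmax : IsLocalMax l m := by
      filter_upwards [mem_interior_iff_mem_nhds.1 h2.2] with y hy
      rw [hlm]; exact a1.2 y hy
    have := hmax.hasFDerivAt_eq_zero l.hasFDerivAt
    exact hl this
  have hcount : 2 * S.ncard + M.card ≤ n * n := by
    have e1 : hSf.toFinset.card * 2 ≤ (hSf.toFinset.biUnion E).card := by
      rw [Finset.card_biUnion (fun a ha b hb h => hdisj ha hb h), ← smul_eq_mul]
      exact Finset.card_nsmul_le_sum _ _ _ hE2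
    have e2 : (hSf.toFinset.biUnion E ∪ M).card ≤ (V ×ˢ V).card := by
      apply Finset.card_le_card
      apply Finset.union_subset
      · exact Finset.biUnion_subset.2 fun F _ => Finset.filter_subset _ _
      · exact Finset.filter_subset _ _
    rw [Finset.card_union_of_disjoint hdis2, Finset.card_product, hVn] at e2
    rw [Set.ncard_eq_toFinset_card _ hSf]
    omega
  have hc' : (2:ℝ) * S.ncard + M.card ≤ n * n := by exact_mod_cast hcount
  have hNM' : (N.card:ℝ) ≤ M.card := by exact_mod_cast hNM
  rw [hVn] at hmain
  have h6 : (n:ℝ)^2 * (2^d)⁻¹ ≤ N.card := by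
    rw [← div_eq_mul_inv, div_le_iff₀' (by positivity)]; exact hmain
  rw [zpow_neg, zpow_natCast]
  nlinarith
end

section
/- Let P ⊂ ℝ^d be a centrally symmetric d-dimensional polytope with n vertices, and let j be an integer with 1 ≤ j ≤ (d−2)/2. Then f_j(P) ≤ (n/(n−1))·(1 − 2^{−d})·C(n,j+1). -/
open Real

open MeasureTheory Pointwise Classical in
theorem vol_aux {d : ℕ} (K : Set (EuclideanSpace ℝ (Fin d))) (hKo : IsOpen K) (hc : Convex ℝ K)
    (hne : K.Nonempty) (hb : Bornology.IsBounded K) (hs : ∀ x ∈ K, -x ∈ K)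
    (S : Finset (EuclideanSpace ℝ (Fin d)))
    (hS : ∀ u ∈ S, ∀ x ∈ K, (2⁻¹ : ℝ) • (u + x) ∈ K) :
    (S.card : ℝ)^2 / 2^d ≤ ((S ×ˢ S).filter (fun p => (2⁻¹ : ℝ) • (p.1 - p.2) ∈ K)).card := by
  set m := volume.real K with hm
  have hfin : volume K ≠ ⊤ := hb.measure_lt_top.ne
  have hmpos : 0 < m := ENNReal.toReal_pos (hKo.measure_pos volume hne).ne' hfin
  let T : EuclideanSpace ℝ (Fin d) → Set (EuclideanSpace ℝ (Fin d)) := fun u => (fun x => -u + x) ⁻¹' K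
  have hTo : ∀ u, IsOpen (T u) := fun u => hKo.preimage (by fun_prop)
  have hTm : ∀ u, MeasurableSet (T u) := fun u => (hTo u).measurableSet
  have hTv : ∀ u, volume (T u) = volume K := fun u => measure_preimage_add volume (-u) K
  set B : Set (EuclideanSpace ℝ (Fin d)) := (2:ℝ) • K with hB
  have hBv : volume.real B = 2^d * m := by
    rw [hB, Measure.real, Measure.addHaar_smul]
    simp [hm, Measure.real]
  have hBf : volume B ≠ ⊤ := by
    rw [hB, Measure.addHaar_smul]
    exact ENNReal.mul_ne_top ENNReal.ofReal_ne_top hfin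
  have hTB : ∀ u ∈ S, T u ⊆ B := by
    intro u hu x hx
    refine ⟨(2⁻¹:ℝ) • x, ?_, by simp⟩
    have := hS u hu _ hx
    simpa using this
  have hBm : MeasurableSet B := (hKo.smul₀ (two_ne_zero (α := ℝ))).measurableSet
  let f : EuclideanSpace ℝ (Fin d) → EuclideanSpace ℝ (Fin d) → ℝ := fun u => (T u).indicator 1
  have hTf : ∀ u, volume (T u) ≠ ⊤ := fun u => by rw [hTv]; exact hfin
  have hfi : ∀ u, Integrable (f u) := fun u => (integrable_indicator_iff (hTm u)).2 (integrableOn_const (hTf u))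
  have hff : ∀ u v, f u * f v = (T u ∩ T v).indicator 1 := by
    intro u v
    ext x
    simp only [f, Pi.mul_apply, Set.indicator_apply, Set.mem_inter_iff, Pi.one_apply]
    split_ifs <;> simp_all
  let b : EuclideanSpace ℝ (Fin d) → ℝ := B.indicator 1
  have hbi : Integrable b := (integrable_indicator_iff hBm).2 (integrableOn_const hBf)
  set n : ℝ := (S.card : ℝ) with hn
  set c : ℝ := n / 2^d with hcdef
  have hffi : ∀ u v, Integrable (f u * f v) := fun u v => by
    rw [hff]
    exact (integrable_indicator_iff ((hTm u).inter (hTm v))).2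
      (integrableOn_const (ne_top_of_le_ne_top (hTf u) (measure_mono Set.inter_subset_left)))
  have key : 0 ≤ ∫ x, ((∑ u ∈ S, f u x) - c * b x)^2 := integral_nonneg fun x => sq_nonneg _
  have hexp : ∀ x, ((∑ u ∈ S, f u x) - c * b x)^2 =
      (∑ u ∈ S, ∑ v ∈ S, (f u * f v) x) - (2 * c) * (∑ u ∈ S, f u x) + c^2 * b x := by
    intro x
    have h1 : (∑ u ∈ S, f u x) * b x = ∑ u ∈ S, f u x := by
      rw [Finset.sum_mul]
      refine Finset.sum_congr rfl fun u hu => ?_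
      simp only [f, b, Set.indicator_apply, Pi.one_apply]
      by_cases h : x ∈ T u
      · simp [h, hTB u hu h]
      · simp [h]
    have h2 : b x * b x = b x := by
      simp only [b, Set.indicator_apply, Pi.one_apply]; split_ifs <;> simp
    have h3 : (∑ u ∈ S, ∑ v ∈ S, (f u * f v) x) = (∑ u ∈ S, f u x) * (∑ u ∈ S, f u x) := by
      rw [Finset.sum_mul_sum]; rfl
    rw [h3]
    linear_combination (-2 * c) * h1 + c^2 * h2
  simp_rw [hexp] at key
  have i1 : Integrable fun x => ∑ u ∈ S, ∑ v ∈ S, (f u * f v) x :=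
    integrable_finsetSum _ fun u _ => integrable_finsetSum _ fun v _ => hffi u v
  have i2 : Integrable fun x => (2 * c) * (∑ u ∈ S, f u x) :=
    (integrable_finsetSum _ fun u _ => hfi u).const_mul _
  have i3 : Integrable fun x => (∑ u ∈ S, ∑ v ∈ S, (f u * f v) x) - (2 * c) * (∑ u ∈ S, f u x) := i1.sub i2
  rw [integral_add i3 (hbi.const_mul _), integral_sub i1 i2, integral_const_mul, integral_const_mul,
    integral_finsetSum _ (fun u _ => hfi u),
    integral_finsetSum _ (fun u _ => integrable_finsetSum _ fun v _ => hffi u v)] at key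
  have e1 : ∀ u, ∫ x, f u x = m := fun u => by
    simp only [f]; rw [integral_indicator_one (hTm u), Measure.real, hTv]; rfl
  have e2 : ∫ x, b x = 2^d * m := by
    simp only [b]; rw [integral_indicator_one hBm, hBv]
  have e3 : ∀ u ∈ S, ∫ x, ∑ v ∈ S, (f u * f v) x ≤
      ∑ v ∈ S, if (2⁻¹ : ℝ) • (u - v) ∈ K then m else 0 := by
    intro u hu
    rw [integral_finsetSum _ (fun v _ => hffi u v)]
    refine Finset.sum_le_sum fun v hv => ?_
    rw [hff, integral_indicator_one ((hTm u).inter (hTm v))]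
    split_ifs with h
    · have : m = volume.real (T u) := by rw [Measure.real, hTv]; rfl
      rw [this]
      exact measureReal_mono Set.inter_subset_left (hTf u)
    · have : T u ∩ T v = ∅ := by
        by_contra hne
        obtain ⟨x, hxu, hxv⟩ := Set.nonempty_iff_ne_empty.2 hne
        apply h
        have := hc (hs _ hxu) hxv (a := 2⁻¹) (b := 2⁻¹) (by norm_num) (by norm_num) (by norm_num)
        convert this using 1
        module
      simp [this]
  have e4 := Finset.sum_le_sum e3
  rw [← Finset.sum_product', ← Finset.sum_filter (fun p : EuclideanSpace ℝ (Fin d) × EuclideanSpace ℝ (Fin d) => (2⁻¹ : ℝ) • (p.1 - p.2) ∈ K) (fun _ => m), Finset.sum_const, nsmul_eq_mul] at e4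
  simp only [e1, e2, Finset.sum_const, nsmul_eq_mul] at key
  set N : ℝ := (((S ×ˢ S).filter (fun p => (2⁻¹ : ℝ) • (p.1 - p.2) ∈ K)).card : ℝ) with hN
  have h2d : (0:ℝ) < 2^d := by positivity
  have hcd : c * 2^d = n := by rw [hcdef]; field_simp
  have : n^2 / 2^d = c * n := by rw [hcdef]; ring
  rw [this]
  have : c * n * m ≤ N * m := by
    have : c^2 * (2^d * m) = c * n * m := by rw [← hcd]; ring
    rw [this, ← hn] at key
    linarith
  exact le_of_mul_le_mul_right this hmpos

theorem clique_aux {α : Type*} [DecidableEq α] (S : Finset α) (j : ℕ) (hj : 1 ≤ j) (𝒯 : Finset (Finset α))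
    (A : Finset (α × α)) (hA : ∀ p ∈ A, p.1 ∈ S ∧ p.2 ∈ S ∧ p.1 ≠ p.2)
    (hT : ∀ T ∈ 𝒯, T ⊆ S ∧ T.card = j + 1 ∧ T.offDiag ⊆ A) :
    𝒯.card * ((j + 1) * j) ≤ A.card * (S.card - 2).choose (j - 1) := by
  have h := Finset.sum_card_bipartiteAbove_eq_sum_card_bipartiteBelow (s := 𝒯) (t := A)
    (fun T p => p ∈ T.offDiag)
  have h1 : ∀ T ∈ 𝒯, (Finset.bipartiteAbove (fun (T : Finset α) p => p ∈ T.offDiag) A T).card = (j+1)*j := by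
    intro T hTT
    obtain ⟨_, hc, hs⟩ := hT T hTT
    have : Finset.bipartiteAbove (fun (T : Finset α) p => p ∈ T.offDiag) A T = T.offDiag := by
      ext p; simp only [Finset.bipartiteAbove, Finset.mem_filter]
      exact ⟨fun h => h.2, fun h => ⟨hs h, h⟩⟩
    rw [this, Finset.offDiag_card, hc]
    have : (j+1)*(j+1) = (j+1)*j + (j+1) := by ring
    omega
  have h2 : ∀ p ∈ A, (Finset.bipartiteBelow (fun (T : Finset α) p => p ∈ T.offDiag) 𝒯 p).card ≤ (S.card - 2).choose (j-1) := by
    rintro ⟨u, w⟩ hp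
    obtain ⟨hu, hw, huw⟩ := hA _ hp
    simp only at hu hw huw
    have hc2 : ({u, w} : Finset α).card = 2 := Finset.card_pair huw
    have : (S \ {u, w}).card = S.card - 2 := by
      rw [Finset.card_sdiff_of_subset (by simp [Finset.insert_subset_iff, hu, hw]), hc2]
    rw [← this, ← Finset.card_powersetCard]
    refine Finset.card_le_card_of_injOn (fun T => T \ {u, w}) ?_ ?_
    · intro T hTT
      simp only [Finset.bipartiteBelow, Finset.coe_filter, Set.mem_ofPred_eq, Finset.mem_offDiag] at hTT
      obtain ⟨hs, hc, _⟩ := hT T hTT.1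
      simp only [Finset.mem_coe, Finset.mem_powersetCard]
      refine ⟨Finset.sdiff_subset_sdiff hs le_rfl, ?_⟩
      rw [Finset.card_sdiff_of_subset (by simp [Finset.insert_subset_iff, hTT.2]), hc2, hc]
      omega
    · intro T hTT T' hTT' he
      simp only [Finset.bipartiteBelow, Finset.coe_filter, Set.mem_ofPred_eq, Finset.mem_offDiag] at hTT hTT'
      have a1 : {u, w} ⊆ T := by simp [Finset.insert_subset_iff, hTT.2]
      have a2 : {u, w} ⊆ T' := by simp [Finset.insert_subset_iff, hTT'.2]
      simp only at he
      rw [← Finset.sdiff_union_of_subset a1, he, Finset.sdiff_union_of_subset a2]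
  rw [Finset.sum_congr rfl h1, Finset.sum_const, smul_eq_mul] at h
  rw [h]
  calc _ ≤ ∑ p ∈ A, (S.card - 2).choose (j-1) := Finset.sum_le_sum h2
    _ = _ := by rw [Finset.sum_const, smul_eq_mul]
theorem face_inter {d : ℕ} {P F : Set (EuclideanSpace ℝ (Fin d))} (hF : IsExposed ℝ P F)
    (hne : F.Nonempty) : F = P ∩ (affineSpan ℝ F : Set (EuclideanSpace ℝ (Fin d))) := by
  obtain ⟨l, hl⟩ := hF hne
  obtain ⟨x₀, hx₀⟩ := hne
  apply Set.Subset.antisymm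
  · exact fun x hx => ⟨hF.subset hx, subset_affineSpan ℝ F hx⟩
  · rintro x ⟨hxP, hx⟩
    have hconst : ∀ y ∈ F, l y = l x₀ := by
      intro y hy
      have h1 := hl ▸ hy
      have h2 := hl ▸ hx₀
      exact le_antisymm (h2.2 _ h1.1) (h1.2 _ h2.1)
    have hx' : l x = l x₀ := by
      refine affineSpan_induction (p := fun x => l x = l x₀) hx hconst ?_
      intro c u v w hu hv hw
      simp only [vsub_eq_sub, vadd_eq_add, map_add, map_smul, map_sub, hu, hv, hw]
      simp
    rw [hl]
    refine ⟨hxP, fun y hy => ?_⟩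
    rw [hx']
    have h2 := hl ▸ hx₀
    exact h2.2 y hy

theorem face_disj {d : ℕ} {P F : Set (EuclideanSpace ℝ (Fin d))} (hF : IsExposed ℝ P F)
    (hdim : affineSpan ℝ P = ⊤) (hlt : Module.finrank ℝ (vectorSpan ℝ F) < d)
    {x : EuclideanSpace ℝ (Fin d)} (hx : x ∈ F) : x ∉ interior P := by
  intro hxi
  obtain ⟨l, hl⟩ := hF ⟨x, hx⟩
  have h1 := hl ▸ hx
  have hmax : IsLocalMax l x := by
    filter_upwards [mem_interior_iff_mem_nhds.1 hxi] with y hy using h1.2 y hy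
  have hl0 : l = 0 := hmax.hasFDerivAt_eq_zero l.hasFDerivAt
  have hFP : F = P := by
    rw [hl, hl0]
    ext y
    simp
  rw [hFP, ← direction_affineSpan, hdim, AffineSubspace.direction_top, finrank_top] at hlt
  simp at hlt

theorem face_simplex {d j : ℕ} {P F : Set (EuclideanSpace ℝ (Fin d))} (hF : IsExposed ℝ P F)
    (hPc : Convex ℝ P) (hPk : IsCompact P) (hfin : (P.extremePoints ℝ).Finite)
    (hne : F.Nonempty) (hj : Module.finrank ℝ (vectorSpan ℝ F) = j) :
    ∃ T : Finset (EuclideanSpace ℝ (Fin d)), T ⊆ hfin.toFinset ∧ (T : Set _) ⊆ F ∧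
      T.card = j + 1 ∧ affineSpan ℝ (T : Set (EuclideanSpace ℝ (Fin d))) = affineSpan ℝ F := by
  have hFk := hF.isCompact hPk
  have hFc := hF.convex hPc
  have hext := hF.isExtreme.extremePoints_eq
  have hff : (F.extremePoints ℝ).Finite := hfin.subset (by rw [hext]; exact Set.inter_subset_right)
  have hKM := closure_convexHull_extremePoints hFk hFc
  rw [(hff.isClosed_convexHull ℝ).closure_eq] at hKM
  obtain ⟨t, ht, hspan, hind⟩ := exists_affineIndependent ℝ (EuclideanSpace ℝ (Fin d)) (F.extremePoints ℝ)
  have hspan' : affineSpan ℝ t = affineSpan ℝ F := by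
    rw [hspan, ← affineSpan_convexHull, hKM]
  have htf : t.Finite := hff.subset ht
  have htne : t.Nonempty := by
    rw [← affineSpan_nonempty ℝ, hspan', affineSpan_nonempty]; exact hne
  refine ⟨htf.toFinset, ?_, ?_, ?_, ?_⟩
  · intro x hx
    have := ht (htf.mem_toFinset.1 hx)
    rw [hext] at this
    exact hfin.mem_toFinset.2 this.2
  · rw [htf.coe_toFinset]
    exact ht.trans extremePoints_subset
  · have := htf.fintype
    have := htne.to_subtype
    have h := hind.finrank_vectorSpan_add_one
    rw [Subtype.range_coe, ← direction_affineSpan, hspan', direction_affineSpan, hj] at h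
    rw [h, ← Set.toFinset_card]
    congr 1
    ext; simp
  · rw [htf.coe_toFinset, hspan']

/-- Proposition 2.2: a cs `d`-polytope with `n` vertices has at most
`(n/(n-1))(1 - 2^{-d}) C(n, j+1)` faces of dimension `j`, for `1 ≤ j ≤ (d-2)/2`. -/
theorem stmt_5 (d n j : ℕ) (P : Set (EuclideanSpace ℝ (Fin d)))
    (hP : IsCSPolytope P) (hdim : affineSpan ℝ P = ⊤)
    (hn : (Set.extremePoints ℝ P).ncard = n)
    (hj1 : 1 ≤ j) (hjd : 2 * j + 2 ≤ d) :
    (faceCount P j : ℝ) ≤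
      ((n : ℝ) / ((n : ℝ) - 1)) * (1 - (2 : ℝ) ^ (-(d : ℤ))) * (n.choose (j + 1) : ℝ) := by
  classical
  obtain ⟨⟨V, hV⟩, hsym⟩ := hP
  have hPc : Convex ℝ P := hV ▸ convex_convexHull ℝ _
  have hPk : IsCompact P := hV ▸ V.finite_toSet.isCompact_convexHull ℝ
  have hfin : (P.extremePoints ℝ).Finite := by
    refine V.finite_toSet.subset ?_
    rw [hV]; exact extremePoints_convexHull_subset
  have hneg : ∀ x ∈ P, -x ∈ P := by
    intro x hx
    rw [hsym] at hx
    exact hx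
  set S := hfin.toFinset with hSdef
  have hcard : S.card = n := by rw [← hn, Set.ncard_eq_toFinset_card _ hfin]
  have hSneg : ∀ x ∈ S, -x ∈ S := by
    intro x hx
    rw [hSdef, hfin.mem_toFinset] at hx ⊢
    have h := image_extremePoints (LinearEquiv.neg ℝ (M := EuclideanSpace ℝ (Fin d))) P
    have h2 : (LinearEquiv.neg ℝ (M := EuclideanSpace ℝ (Fin d))) '' P = P := by
      ext y
      constructor
      · rintro ⟨z, hz, rfl⟩; exact hneg z hz
      · intro hy; exact ⟨-y, hneg y hy, by simp⟩
    rw [h2] at h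
    rw [← h]
    exact ⟨x, hx, rfl⟩
  have hKs : ∀ x ∈ interior P, -x ∈ interior P := by
    intro x hx
    refine mem_interior.2 ⟨Neg.neg ⁻¹' interior P, ?_, isOpen_interior.preimage continuous_neg, by simpa using hx⟩
    intro y hy
    have := hneg _ (interior_subset hy)
    simpa using this
  have hvol := vol_aux (interior P) isOpen_interior hPc.interior
    (hPc.interior_nonempty_iff_affineSpan_eq_top.2 hdim) (hPk.isBounded.subset interior_subset) hKs S
    (by
      intro u hu x hx
      rw [smul_add]
      exact hPc.combo_self_interior_mem_interior (extremePoints_subset (hfin.mem_toFinset.1 hu)) hx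
        (by norm_num) (by norm_num) (by norm_num))
  rw [hcard] at hvol
  let A := (S ×ˢ S).filter (fun p => p.1 ≠ p.2 ∧ (2⁻¹ : ℝ) • (p.1 + p.2) ∉ interior P)
  let A' := (S ×ˢ S).filter (fun p => (2⁻¹ : ℝ) • (p.1 - p.2) ∈ interior P)
  have hAA' : A'.card + A.card ≤ n^2 := by
    have h1 : (A'.image (fun p => (p.1, -p.2))).card = A'.card := by
      apply Finset.card_image_of_injective
      rintro ⟨a, b⟩ ⟨c, e⟩ h
      simpa using h
    rw [← h1, ← Finset.card_union_of_disjoint, ← hcard, sq, ← Finset.card_product]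
    · apply Finset.card_le_card
      intro p hp
      rcases Finset.mem_union.1 hp with hp | hp
      · obtain ⟨q, hq, rfl⟩ := Finset.mem_image.1 hp
        have := Finset.mem_product.1 (Finset.mem_filter.1 hq).1
        exact Finset.mem_product.2 ⟨this.1, hSneg _ this.2⟩
      · exact (Finset.mem_filter.1 hp).1
    · rw [Finset.disjoint_left]
      intro p hp hp'
      obtain ⟨q, hq, rfl⟩ := Finset.mem_image.1 hp
      have h2 := (Finset.mem_filter.1 hq).2
      have h3 := (Finset.mem_filter.1 hp').2.2
      apply h3
      simpa [sub_eq_add_neg] using h2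
  set 𝓕 := {F : Set (EuclideanSpace ℝ (Fin d)) |
    IsExposed ℝ P F ∧ F.Nonempty ∧ Module.finrank ℝ (vectorSpan ℝ F) = j} with h𝓕
  let 𝒯 := (S.powersetCard (j+1)).filter (fun T => T.offDiag ⊆ A)
  have hfc : faceCount P j ≤ 𝒯.card := by
    have hex : ∀ F ∈ 𝓕, ∃ T : Finset (EuclideanSpace ℝ (Fin d)), T ⊆ S ∧ (T : Set _) ⊆ F ∧
        T.card = j + 1 ∧ affineSpan ℝ (T : Set (EuclideanSpace ℝ (Fin d))) = affineSpan ℝ F :=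
      fun F hF => face_simplex hF.1 hPc hPk hfin hF.2.1 hF.2.2
    choose! g hg1 hg2 hg3 hg4 using hex
    rw [← Set.ncard_coe_finset]
    refine Set.ncard_le_ncard_of_injOn g ?_ ?_ 𝒯.finite_toSet
    · intro F hF
      refine Finset.mem_coe.2 (Finset.mem_filter.2 ⟨Finset.mem_powersetCard.2 ⟨hg1 F hF, hg3 F hF⟩, ?_⟩)
      intro p hp
      obtain ⟨h1, h2, h3⟩ := Finset.mem_offDiag.1 hp
      refine Finset.mem_filter.2 ⟨Finset.mem_product.2 ⟨hg1 F hF h1, hg1 F hF h2⟩, h3, ?_⟩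
      refine face_disj hF.1 hdim (by rw [hF.2.2]; omega) ?_
      rw [smul_add]
      exact hF.1.convex hPc (hg2 F hF h1) (hg2 F hF h2) (by norm_num) (by norm_num) (by norm_num)
    · intro F hF F' hF' h
      rw [face_inter hF.1 hF.2.1, face_inter hF'.1 hF'.2.1, ← hg4 F hF, ← hg4 F' hF', h]
  have hcl := clique_aux S j hj1 𝒯 A
    (fun p hp => ⟨(Finset.mem_product.1 (Finset.mem_filter.1 hp).1).1,
      (Finset.mem_product.1 (Finset.mem_filter.1 hp).1).2, (Finset.mem_filter.1 hp).2.1⟩)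
    (fun T hT => ⟨(Finset.mem_powersetCard.1 (Finset.mem_filter.1 hT).1).1,
      (Finset.mem_powersetCard.1 (Finset.mem_filter.1 hT).1).2, (Finset.mem_filter.1 hT).2⟩)
  rw [hcard] at hcl
  rcases Nat.lt_or_ge n 2 with hn2 | hn2
  · have h1 : 𝒯.card ≤ n.choose (j+1) := by
      rw [← hcard, ← Finset.card_powersetCard]
      exact Finset.card_filter_le _ _
    have h0 : n.choose (j+1) = 0 := Nat.choose_eq_zero_of_lt (by omega)
    have : faceCount P j = 0 := by omega
    rw [this, h0]; simp
  obtain ⟨k, rfl⟩ := Nat.exists_eq_add_of_le' hn2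
  obtain ⟨i, rfl⟩ := Nat.exists_eq_add_of_le' hj1
  simp only [Nat.add_sub_cancel] at hcl
  have c1 := Nat.add_one_mul_choose_eq (k+1) (i+1)
  have c2 := Nat.add_one_mul_choose_eq k i
  have hvol' : ((k + 2 : ℕ) : ℝ)^2 / 2^d ≤ A'.card := by
    convert hvol using 3
  have hcl' : (faceCount P (i+1) : ℝ) * ((i + 2) * (i+1)) ≤ A.card * k.choose i := by
    have := (Nat.mul_le_mul_right ((i + 1 + 1) * (i+1)) hfc).trans hcl
    have h : ((faceCount P (i+1) * ((i + 1 + 1) * (i+1)) : ℕ) : ℝ) ≤ ((A.card * k.choose i : ℕ) : ℝ) := by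
      exact_mod_cast this
    push_cast at h
    linarith
  have c1' : ((k:ℝ) + 2) * ((k+1).choose (i+1) : ℝ) = ((k+2).choose (i+2) : ℝ) * (i + 2) := by
    have h := congrArg (Nat.cast : ℕ → ℝ) c1
    push_cast at h
    linarith
  have c2' : ((k:ℝ) + 1) * (k.choose i : ℝ) = ((k+1).choose (i+1) : ℝ) * (i + 1) := by
    exact_mod_cast c2
  have hAA'' : (A'.card : ℝ) + A.card ≤ ((k + 2 : ℕ) : ℝ)^2 := by exact_mod_cast hAA'
  rw [zpow_neg, zpow_natCast]
  push_cast at *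
  have hAr : (A.card : ℝ) ≤ ((k:ℝ)+2)^2 * (1 - ((2:ℝ)^d)⁻¹) := by
    rw [div_eq_mul_inv] at hvol'
    linarith
  have hk : ((k:ℝ) + 2 - 1) = k + 1 := by ring
  rw [hk, show i + 1 + 1 = i + 2 from rfl]
  have hi : (0:ℝ) < (i + 2) * (i + 1) := by positivity
  refine le_of_mul_le_mul_right (hcl'.trans ((mul_le_mul_of_nonneg_right hAr (by positivity)).trans (le_of_eq ?_))) hi
  have hk1 : (k:ℝ) + 1 ≠ 0 := by positivity
  have hh : ((k:ℝ)+2) * (k.choose i : ℝ) = ((k+2).choose (i+2) : ℝ) * ((i + 2) * (i + 1)) / (k + 1) := by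
    rw [eq_div_iff hk1]
    linear_combination ((k:ℝ)+2) * c2' + (i + 1) * c1'
  linear_combination ((k:ℝ)+2) * (1 - ((2:ℝ)^d)⁻¹) * hh
end

section
/- Let k be a positive integer and let M be a multiset of nonzero complex numbers with |M| = 4k−2. Then M is the multiset of roots (with multiplicity) of a raked self-inversive polynomial of degree 4k−2 if and only if (i) the multiset of complex conjugates of M equals the multiset of inverses of M, i.e. ζ ∈ M with multiplicity m if and only if 1/conj(ζ) ∈ M with multiplicity m, and (ii) the odd power sums Σ_{ζ ∈ M} ζ^{2j−1} = 0 for all j = 1, …, k−1. -/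
open Polynomial

/-- A raked self-inversive polynomial of degree `4k-2`: a complex polynomial of degree
exactly `4k-2` all of whose odd-degree coefficients vanish except possibly the middle
one (degree `2k-1`), and which satisfies `D(z) = z^{4k-2} · conj(D(1/conj z))`. -/
def RakedSelfInversive (k : ℕ) (D : Polynomial ℂ) : Prop :=
  D.natDegree = 4 * k - 2 ∧ D ≠ 0 ∧
  (∀ i : ℕ, Odd i → i ≠ 2 * k - 1 → D.coeff i = 0) ∧
  (∀ z : ℂ, z ≠ 0 →
    D.eval z = z ^ (4 * k - 2) * (starRingEnd ℂ) (D.eval (((starRingEnd ℂ) z)⁻¹)))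

theorem aux_newton (M : Multiset ℂ) (n : ℕ) :
    (n : ℂ) * M.esymm n = (-1) ^ (n + 1) *
      ∑ a ∈ Finset.HasAntidiagonal.antidiagonal n with a.1 < n,
        (-1) ^ a.1 * M.esymm a.1 * (M.map (fun z => z ^ a.2)).sum := by
  obtain ⟨l, rfl⟩ := Quot.exists_rep M
  have hl : (Finset.univ.val.map l.get : Multiset ℂ) = (l : Multiset ℂ) := by
    rw [Fin.univ_val_map, List.ofFn_get]
  have h := congrArg (MvPolynomial.aeval l.get)
    (MvPolynomial.mul_esymm_eq_sum (Fin l.length) ℂ n)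
  simp only [map_mul, map_natCast, map_pow, map_neg, map_one, map_sum,
    MvPolynomial.aeval_esymm_eq_multiset_esymm] at h
  rw [hl] at h
  refine h.trans ?_
  congr 1
  refine Finset.sum_congr rfl fun a _ => ?_
  congr 1
  change _ = (Multiset.map (fun z => z ^ a.2) (l : Multiset ℂ)).sum
  rw [← hl, Multiset.map_map]
  rw [MvPolynomial.psum, map_sum]
  simp only [map_pow, MvPolynomial.aeval_X]
  rfl

theorem aux_esymm_of_psum (M : Multiset ℂ) (m : ℕ)
    (h : ∀ i, Odd i → i < m → (M.map (fun z => z ^ i)).sum = 0) :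
    ∀ i, Odd i → i < m → M.esymm i = 0 := by
  intro i
  induction i using Nat.strong_induction_on with
  | _ i ih =>
    intro hi him
    have hN := aux_newton M i
    rw [Finset.sum_eq_zero, mul_zero] at hN
    · rcases mul_eq_zero.mp hN with h1 | h1
      · exfalso
        have : i = 0 := by exact_mod_cast h1
        subst this
        simp at hi
      · exact h1
    · rintro ⟨a, b⟩ hab
      simp only [Finset.mem_filter, Finset.HasAntidiagonal.mem_antidiagonal] at hab
      obtain ⟨hab, hlt⟩ := hab
      rcases Nat.even_or_odd a with ha | ha
      · have hb : Odd b := by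
          rw [← hab] at hi
          exact (Nat.odd_add'.mp hi).mpr ha
        simp only [h b hb (by omega), mul_zero]
      · simp only [ih a hlt ha (by omega), mul_zero, zero_mul]

theorem aux_psum_of_esymm (M : Multiset ℂ) (m : ℕ)
    (h : ∀ i, Odd i → i < m → M.esymm i = 0) :
    ∀ i, Odd i → i < m → (M.map (fun z => z ^ i)).sum = 0 := by
  intro i
  induction i using Nat.strong_induction_on with
  | _ i ih =>
    intro hi him
    have hN := aux_newton M i
    have hpos : 0 < i := hi.pos
    rw [h i hi him, Finset.sum_eq_single (0, i)] at hN
    · simpa [Multiset.esymm] using hN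
    · rintro ⟨a, b⟩ hab hne
      simp only [Finset.mem_filter, Finset.HasAntidiagonal.mem_antidiagonal] at hab
      obtain ⟨hab, hlt⟩ := hab
      rcases Nat.even_or_odd a with ha | ha
      · have hb : Odd b := by
          rw [← hab] at hi
          exact (Nat.odd_add'.mp hi).mpr ha
        have : a ≠ 0 := by
          rintro rfl
          apply hne
          simp only [zero_add] at hab
          rw [hab]
        simp only [ih b (by omega) hb (by omega), mul_zero]
      · simp only [h a ha (by omega), mul_zero, zero_mul]
    · intro hc
      simp [hpos, Finset.HasAntidiagonal.mem_antidiagonal] at hc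

theorem aux_eval (M : Multiset ℂ) (h0 : (0 : ℂ) ∉ M) (z : ℂ) (hz : z ≠ 0) :
    z ^ (Multiset.card M) * (starRingEnd ℂ)
      (((M.map (fun a => X - C a)).prod).eval (((starRingEnd ℂ) z)⁻¹)) =
    (M.map (fun a => -(starRingEnd ℂ) a)).prod *
      ((((M.map (fun a => ((starRingEnd ℂ) a)⁻¹)).map (fun a => X - C a)).prod).eval z) := by
  induction M using Multiset.induction_on with
  | empty => simp
  | cons a M ih =>
    have ha : (starRingEnd ℂ) a ≠ 0 := by
      intro h
      apply h0
      rw [map_eq_zero] at h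
      simp [h]
    have h0' : (0 : ℂ) ∉ M := fun h => h0 (Multiset.mem_cons_of_mem h)
    specialize ih h0'
    simp only [Multiset.map_cons, Multiset.prod_cons, Multiset.card_cons, eval_mul, eval_sub,
      eval_X, eval_C, map_mul, map_sub, map_inv₀, Complex.conj_conj]
    have e1 : z * (z⁻¹ - (starRingEnd ℂ) a) =
        -(starRingEnd ℂ) a * (z - ((starRingEnd ℂ) a)⁻¹) := by
      field_simp
      ring
    linear_combination (z * (z⁻¹ - (starRingEnd ℂ) a)) * ih +
      ((M.map (fun a => -(starRingEnd ℂ) a)).prod *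
      ((((M.map (fun a => ((starRingEnd ℂ) a)⁻¹)).map (fun a => X - C a)).prod).eval z)) * e1

theorem aux_eq (p q : ℂ[X]) (h : ∀ z : ℂ, z ≠ 0 → p.eval z = q.eval z) : p = q := by
  apply Polynomial.eq_of_infinite_eval_eq
  refine Set.Infinite.mono (s := ({0} : Set ℂ)ᶜ) ?_ ?_
  · intro z hz
    exact h z hz
  · exact (Set.finite_singleton (0 : ℂ)).infinite_compl

theorem aux_coeff (D : ℂ[X]) (N : ℕ) (hN : D.natDegree ≤ N)
    (h : ∀ z : ℂ, z ≠ 0 →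
      D.eval z = z ^ N * (starRingEnd ℂ) (D.eval (((starRingEnd ℂ) z)⁻¹)))
    (i : ℕ) (hi : i ≤ N) : D.coeff i = (starRingEnd ℂ) (D.coeff (N - i)) := by
  have key : D = reflect N (D.map (starRingEnd ℂ)) := by
    apply aux_eq
    intro z hz
    rw [h z hz]
    have : Invertible (z⁻¹) := invertibleOfNonzero (inv_ne_zero hz)
    have h2 := eval₂_reflect_mul_pow (RingHom.id ℂ) (z⁻¹) N (D.map (starRingEnd ℂ))
      (natDegree_map_le.trans hN)
    rw [invOf_eq_inv, inv_inv] at h2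
    change eval z _ * _ = eval _ _ at h2
    have h3 : (starRingEnd ℂ) (D.eval (((starRingEnd ℂ) z)⁻¹)) =
        eval z⁻¹ (D.map (starRingEnd ℂ)) := by
      rw [eval_map, ← eval₂_at_apply]
      simp
    rw [h3, ← h2, inv_pow]
    field_simp
  conv_lhs => rw [key]
  rw [coeff_reflect, revAt_le hi, coeff_map]

/-- Lemma 3.3: a multiset `M` of `4k-2` nonzero complex numbers is the root multiset of
a raked self-inversive polynomial of degree `4k-2` if and only if `conj(M) = M⁻¹`
(equivalently, `M` is invariant under `ζ ↦ 1/conj ζ` with multiplicities) and the odd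
power sums `∑_{ζ∈M} ζ^{2j-1}` vanish for `j = 1, …, k-1`. -/
theorem stmt_9 (k : ℕ) (hk : 0 < k) (M : Multiset ℂ)
    (h0 : (0 : ℂ) ∉ M) (hcard : Multiset.card M = 4 * k - 2) :
    (∃ D : Polynomial ℂ, RakedSelfInversive k D ∧ D.roots = M) ↔
      (M.map (fun z => ((starRingEnd ℂ) z)⁻¹) = M ∧
       ∀ j : ℕ, 1 ≤ j → j ≤ k - 1 → (M.map (fun z => z ^ (2 * j - 1))).sum = 0) := by
  constructor
  · rintro ⟨D, ⟨hdeg, hD0, hodd, hinv⟩, hroots⟩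
    have hfac := C_leadingCoeff_mul_prod_multiset_X_sub_C (p := D)
      (by rw [hroots, hcard, hdeg])
    rw [hroots] at hfac
    have hlc : D.leadingCoeff ≠ 0 := leadingCoeff_ne_zero.mpr hD0
    constructor
    · have key : D = C ((starRingEnd ℂ) D.leadingCoeff *
          (M.map (fun a => -(starRingEnd ℂ) a)).prod) *
          ((M.map (fun a => ((starRingEnd ℂ) a)⁻¹)).map (fun a => X - C a)).prod := by
        apply aux_eq
        intro z hz
        rw [hinv z hz]
        have h1 := aux_eval M h0 z hz
        rw [hcard] at h1
        have h2 : D.eval (((starRingEnd ℂ) z)⁻¹) = D.leadingCoeff *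
            ((M.map (fun a => X - C a)).prod).eval (((starRingEnd ℂ) z)⁻¹) := by
          conv_lhs => rw [← hfac]
          rw [eval_mul, eval_C]
        rw [h2, map_mul, eval_mul, eval_C]
        linear_combination ((starRingEnd ℂ) D.leadingCoeff) * h1
      have hne : (starRingEnd ℂ) D.leadingCoeff *
          (M.map (fun a => -(starRingEnd ℂ) a)).prod ≠ 0 := by
        intro hc
        rw [hc] at key
        apply hD0
        rw [key]
        simp
      have h3 := congrArg roots key
      rw [roots_C_mul _ hne, roots_multiset_prod_X_sub_C, hroots] at h3
      exact h3.symm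
    · intro j hj1 hj2
      refine aux_psum_of_esymm M (2 * k - 1) ?_ (2 * j - 1) ⟨j - 1, by omega⟩ (by omega)
      intro i hi hik
      have h4 := hodd (4 * k - 2 - i) (by rw [Nat.odd_iff] at *; omega) (by omega)
      rw [← hfac, coeff_C_mul, Multiset.prod_X_sub_C_coeff _ (by omega), hcard,
        show 4 * k - 2 - (4 * k - 2 - i) = i by omega] at h4
      simpa [hlc] using h4
  · rintro ⟨hM, hp⟩
    set u : ℂ := (M.map (fun a => -(starRingEnd ℂ) a)).prod with hu
    have hu1 : (starRingEnd ℂ) u * u = 1 := by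
      have e : u = (M.map (fun a => -a⁻¹)).prod := by
        rw [hu]
        conv_lhs => rw [← hM]
        rw [Multiset.map_map]
        simp
      have e2 : (starRingEnd ℂ) u = (M.map (fun a => -a)).prod := by
        rw [hu, map_multiset_prod, Multiset.map_map]
        simp
      rw [e2, e, ← Multiset.prod_map_mul]
      apply Multiset.prod_eq_one
      intro x hx
      obtain ⟨a, ha, rfl⟩ := Multiset.mem_map.mp hx
      have : a ≠ 0 := fun h => h0 (h ▸ ha)
      field_simp
    obtain ⟨c, hc⟩ := IsAlgClosed.exists_pow_nat_eq u (n := 2) (by norm_num)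
    have hc1 : (starRingEnd ℂ) c * c = 1 := by
      rw [mul_comm, Complex.mul_conj]
      rw [mul_comm, Complex.mul_conj, ← hc, map_pow] at hu1
      norm_cast at hu1 ⊢
      nlinarith [Complex.normSq_nonneg c]
    have hc0 : c ≠ 0 := by
      rintro rfl
      simp at hc1
    have hdeg : (C c * (M.map (fun a => X - C a)).prod).natDegree = 4 * k - 2 := by
      rw [natDegree_C_mul hc0, natDegree_multiset_prod_X_sub_C_eq_card, hcard]
    have hinv : ∀ z : ℂ, z ≠ 0 → (C c * (M.map (fun a => X - C a)).prod).eval z =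
        z ^ (4 * k - 2) * (starRingEnd ℂ)
          ((C c * (M.map (fun a => X - C a)).prod).eval (((starRingEnd ℂ) z)⁻¹)) := by
      intro z hz
      have h1 := aux_eval M h0 z hz
      rw [hcard, hM, ← hu, ← hc] at h1
      rw [eval_mul, eval_C, eval_mul, eval_C, map_mul]
      linear_combination (-(starRingEnd ℂ) c) * h1 -
        c * (((M.map (fun a => X - C a)).prod).eval z) * hc1
    have hes := aux_esymm_of_psum M (2 * k - 1) (by
      rintro i ⟨j, rfl⟩ hi
      have := hp (j + 1) (by omega) (by omega)
      simpa [show 2 * (j + 1) - 1 = 2 * j + 1 by omega] using this)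
    have hhigh : ∀ i, Odd i → i < 2 * k - 1 →
        (C c * (M.map (fun a => X - C a)).prod).coeff (4 * k - 2 - i) = 0 := by
      intro i hi hik
      rw [coeff_C_mul, Multiset.prod_X_sub_C_coeff _ (by omega), hcard,
        show 4 * k - 2 - (4 * k - 2 - i) = i by omega, hes i hi hik, mul_zero, mul_zero]
    refine ⟨C c * (M.map (fun a => X - C a)).prod, ⟨hdeg, ?_, ?_, hinv⟩, ?_⟩
    · exact mul_ne_zero (C_ne_zero.mpr hc0) (monic_multisetProd_X_sub_C M).ne_zero
    · intro i hi hne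
      rcases lt_or_gt_of_ne hne with h | h
      · rw [aux_coeff _ _ hdeg.le hinv i (by omega), hhigh i hi h, map_zero]
      · by_cases hi2 : i ≤ 4 * k - 2
        · have := hhigh (4 * k - 2 - i) (by rw [Nat.odd_iff] at *; omega) (by omega)
          rwa [show 4 * k - 2 - (4 * k - 2 - i) = i by omega] at this
        · exact coeff_eq_zero_of_natDegree_lt (by omega)
    · rw [roots_C_mul _ hc0, roots_multiset_prod_X_sub_C]
end

section
/- Let D(z) be a raked self-inversive polynomial of degree 4k−2 with real coefficients and D(0) ≠ 0, let M be the multiset of roots of D, and suppose both 1 and −1 have even (possibly zero) multiplicity in M. For a real number λ ≠ 0, let M_λ be the multiset obtained from M as follows: view M as a multiset of unordered pairs {ζ, ζ^{−1}} (note conj(M) = M and M^{−1} = M), and replace each pair {ζ, ζ^{−1}} by the pair {z, z^{−1}} of solutions of z + z^{−1} = λ(ζ + ζ^{−1}). Then M_λ is the multiset of roots of some raked self-inversive polynomial of degree 4k−2 with real coefficients. -/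
open Polynomial

theorem aux_rel (lam : ℂ) (z y : ℂ) (hz : z ≠ 0) (hy : y ≠ 0)
    (hzy : (z ^ 2 + 1) * y = lam * (y ^ 2 + 1) * z)
    (pairs pairs' : Multiset (ℂ × ℂ))
    (hdef : Multiset.Rel
      (fun p q => q.1 * q.2 = 1 ∧ q.1 + q.2 = lam * (p.1 + p.2)) pairs pairs')
    (hinv : ∀ p ∈ pairs, p.1 * p.2 = 1) :
    y ^ pairs.card * (pairs'.map (fun q => (z - q.1) * (z - q.2))).prod =
      (lam * z) ^ pairs.card * (pairs.map (fun p => (y - p.1) * (y - p.2))).prod := by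
  induction hdef with
  | zero => simp
  | @cons a b as bs hab _ ih =>
    have ih := ih (fun p hp => hinv p (Multiset.mem_cons_of_mem hp))
    have ha := hinv a (Multiset.mem_cons_self a as)
    obtain ⟨hb1, hb2⟩ := hab
    have key : y * ((z - b.1) * (z - b.2)) = lam * z * ((y - a.1) * (y - a.2)) := by
      linear_combination hzy + y * hb1 - y * z * hb2 - lam * z * ha
    simp only [Multiset.map_cons, Multiset.prod_cons, Multiset.card_cons, pow_succ]
    calc _ = (y ^ as.card * (bs.map (fun q => (z - q.1) * (z - q.2))).prod) *
          (y * ((z - b.1) * (z - b.2))) := by ring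
      _ = _ := by rw [ih, key]; ring

theorem aux_eval_s12 (pairs : Multiset (ℂ × ℂ)) (z : ℂ) :
    (((pairs.map Prod.fst + pairs.map Prod.snd).map (fun a => X - C a)).prod).eval z =
      (pairs.map (fun q => (z - q.1) * (z - q.2))).prod := by
  rw [Multiset.prod_map_mul, eval_multiset_prod]
  simp [Multiset.map_map, Function.comp_def]

theorem aux_y (lam : ℂ) (hlam : lam ≠ 0) (z : ℂ) :
    ∃ y : ℂ, y ≠ 0 ∧ (z ^ 2 + 1) * y = lam * (y ^ 2 + 1) * z ∨ z = 0 := by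
  by_cases hz : z = 0
  · exact ⟨0, Or.inr hz⟩
  obtain ⟨y, hy⟩ := exists_quadratic_eq_zero (a := lam * z) (b := -(z ^ 2 + 1)) (c := lam * z)
    (mul_ne_zero hlam hz) (by
      obtain ⟨s, hs⟩ := IsAlgClosed.exists_pow_nat_eq
        (discrim (lam * z) (-(z ^ 2 + 1)) (lam * z)) (n := 2) (by norm_num)
      exact ⟨s, by rw [← hs]; ring⟩)
  refine ⟨y, Or.inl ⟨?_, by linear_combination -hy⟩⟩
  rintro rfl
  exact mul_ne_zero hlam hz (by linear_combination hy)

theorem aux_conj (P : ℂ[X]) (h : ∀ i, (P.coeff i).im = 0) (z : ℂ) :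
    P.eval ((starRingEnd ℂ) z) = (starRingEnd ℂ) (P.eval z) := by
  have : P.map (starRingEnd ℂ) = P := by
    ext1 i
    rw [coeff_map, Complex.conj_eq_iff_im]
    exact h i
  conv_lhs => rw [← this]
  rw [eval_map, eval₂_at_apply]

theorem aux_comp (P : ℂ[X]) (i : ℕ) : (P.comp (-X)).coeff i = P.coeff i * (-1) ^ i := by
  have : (-X : ℂ[X]) = C (-1) * X := by simp
  rw [this, comp_C_mul_X_coeff]

theorem aux_ext (P Q : ℂ[X]) (h : ∀ z : ℂ, z ≠ 0 → P.eval z = Q.eval z) : P = Q := by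
  apply eq_of_infinite_eval_eq
  refine Set.Infinite.mono (s := {0}ᶜ) (fun z hz => h z hz) ?_
  exact (Set.finite_singleton 0).infinite_compl

/-- Lemma 5.1: the deformation of the root multiset of a raked self-inversive polynomial.
Let `D` be a raked self-inversive polynomial of degree `4k-2` with real coefficients,
`D(0) ≠ 0`, whose roots `1` and `-1` (if any) have even multiplicity.  Split the root
multiset `M` of `D` into unordered pairs `{ζ, ζ⁻¹}` (recorded by the multiset `pairs`),
and replace each pair `{ζ, ζ⁻¹}` by the pair `{z, z⁻¹}` of solutions of
`z + z⁻¹ = λ(ζ + ζ⁻¹)` (recorded by `pairs'`).  Then the resulting multiset `M_λ` is the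
root multiset of some raked self-inversive polynomial of degree `4k-2` with real
coefficients. -/
theorem stmt_12 (k : ℕ) (hk : 0 < k) (D : Polynomial ℂ)
    (hD : RakedSelfInversive k D)
    (hreal : ∀ i : ℕ, (D.coeff i).im = 0)
    (h0 : D.eval 0 ≠ 0)
    (h1 : Even (D.roots.count 1)) (hm1 : Even (D.roots.count (-1)))
    (lam : ℝ) (hlam : lam ≠ 0)
    (pairs pairs' : Multiset (ℂ × ℂ))
    (hpairs : pairs.map Prod.fst + pairs.map Prod.snd = D.roots)
    (hinv : ∀ p ∈ pairs, p.1 * p.2 = 1)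
    (hdef : Multiset.Rel
      (fun p q => q.1 * q.2 = 1 ∧ q.1 + q.2 = (lam : ℂ) * (p.1 + p.2)) pairs pairs')
    (Mlam : Multiset ℂ)
    (hMlam : Mlam = pairs'.map Prod.fst + pairs'.map Prod.snd) :
    ∃ Dlam : Polynomial ℂ, RakedSelfInversive k Dlam ∧
      (∀ i : ℕ, (Dlam.coeff i).im = 0) ∧ Dlam.roots = Mlam := by
  obtain ⟨hdeg, hne, hodd, hself⟩ := hD
  have hlamC : (lam : ℂ) ≠ 0 := by exact_mod_cast hlam
  have hsplit : D = C D.leadingCoeff *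
      ((pairs.map Prod.fst + pairs.map Prod.snd).map (fun a => X - C a)).prod := by
    rw [hpairs]
    exact (IsAlgClosed.splits D).eq_prod_roots
  have hcard : pairs.card = 2 * k - 1 := by
    have h2 : D.roots.card = D.natDegree := (IsAlgClosed.splits D).natDegree_eq_card_roots.symm
    rw [← hpairs, hdeg] at h2
    simp at h2
    omega
  have hcard' : pairs'.card = 2 * k - 1 := by
    rw [← hcard]; exact (Multiset.card_eq_card_of_rel hdef).symm
  obtain ⟨m, rfl⟩ : ∃ m, k = m + 1 := ⟨k - 1, by omega⟩
  have hn : 2 * (m + 1) - 1 = 2 * m + 1 := by omega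
  have hn2 : 4 * (m + 1) - 2 = 2 * (2 * m + 1) := by omega
  rw [hn] at hcard hcard' hodd
  set l := D.leadingCoeff with hl
  have hl0 : l ≠ 0 := leadingCoeff_ne_zero.mpr hne
  have hlreal : (starRingEnd ℂ) l = l := Complex.conj_eq_iff_im.mpr (hreal _)
  set E : ℂ[X] := (Mlam.map (fun a => X - C a)).prod with hE
  have hEmonic : E.Monic := monic_multiset_prod_of_monic _ _ (fun a _ => monic_X_sub_C a)
  have key : ∀ z y : ℂ, z ≠ 0 → y ≠ 0 → (z ^ 2 + 1) * y = lam * (y ^ 2 + 1) * z →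
      y ^ (2 * m + 1) * E.eval z * l = (lam * z) ^ (2 * m + 1) * D.eval y := by
    intro z y hz hy hzy
    have h := aux_rel lam z y hz hy hzy pairs pairs' hdef hinv
    have hDe : D.eval y = l * (pairs.map (fun p => (y - p.1) * (y - p.2))).prod := by
      rw [hsplit, eval_mul, eval_C, aux_eval_s12]
    have hEe : E.eval z = (pairs'.map (fun p => (z - p.1) * (z - p.2))).prod := by
      rw [hE, hMlam, aux_eval_s12]
    rw [hcard] at h
    rw [hDe, hEe, h]; ring
  have hY : ∀ z : ℂ, z ≠ 0 → ∃ y : ℂ, y ≠ 0 ∧ (z ^ 2 + 1) * y = lam * (y ^ 2 + 1) * z := by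
    intro z hz
    obtain ⟨y, hy | hy⟩ := aux_y lam hlamC z
    · exact ⟨y, hy⟩
    · exact absurd hy hz
  have hEreal : ∀ i : ℕ, (E.coeff i).im = 0 := by
    have : E.map (starRingEnd ℂ) = E := by
      apply aux_ext
      intro z hz
      obtain ⟨y, hy, hzy⟩ := hY z hz
      have e1 := key z y hz hy hzy
      have e2 := key ((starRingEnd ℂ) z) ((starRingEnd ℂ) y) (by simpa using hz)
        (by simpa using hy) (by simpa using congrArg (starRingEnd ℂ) hzy)
      have e3 := congrArg (starRingEnd ℂ) e2
      rw [aux_conj D hreal] at e3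
      simp only [map_mul, map_pow, Complex.conj_conj, hlreal, Complex.conj_ofReal] at e3
      have e4 : (E.map (starRingEnd ℂ)).eval z =
          (starRingEnd ℂ) (E.eval ((starRingEnd ℂ) z)) := by
        have := eval₂_at_apply (p := E) (starRingEnd ℂ) ((starRingEnd ℂ) z)
        rw [Complex.conj_conj] at this
        rw [eval_map, this]
      rw [e4]
      have e5 := e3.trans e1.symm
      exact mul_left_cancel₀ (pow_ne_zero _ hy) (mul_right_cancel₀ hl0 e5)
    intro i
    rw [← Complex.conj_eq_iff_im, ← coeff_map, this]
  have hDodd : ∀ y : ℂ, D.eval y - D.eval (-y) =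
      2 * D.coeff (2 * m + 1) * y ^ (2 * m + 1) := by
    intro y
    have : D - D.comp (-X) = C (2 * D.coeff (2 * m + 1)) * X ^ (2 * m + 1) := by
      ext i
      rw [coeff_sub, aux_comp, coeff_C_mul, coeff_X_pow]
      rcases Nat.even_or_odd i with hi | hi
      · have : i ≠ 2 * m + 1 := by
          rintro rfl
          exact (Nat.not_even_iff_odd.mpr ⟨m, rfl⟩) hi
        simp [hi.neg_one_pow, this]
      · by_cases him : i = 2 * m + 1
        · subst him
          simp [hi.neg_one_pow]; ring
        · simp [hodd i hi him, him]
    have := congrArg (eval y) this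
    simpa [eval_comp] using this
  have hEodd : E - E.comp (-X) =
      C (2 * D.coeff (2 * m + 1) * lam ^ (2 * m + 1) / l) * X ^ (2 * m + 1) := by
    apply aux_ext
    intro z hz
    obtain ⟨y, hy, hzy⟩ := hY z hz
    have e1 := key z y hz hy hzy
    have e2 := key (-z) (-y) (by simpa using hz) (by simpa using hy)
      (by linear_combination -hzy)
    have ho : Odd (2 * m + 1) := ⟨m, rfl⟩
    rw [mul_neg, ho.neg_pow, ho.neg_pow] at e2
    have e3 := hDodd y
    simp only [eval_sub, eval_comp, eval_neg, eval_X, eval_mul, eval_C, eval_pow]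
    have hyp : y ^ (2 * m + 1) ≠ 0 := pow_ne_zero _ hy
    apply mul_left_cancel₀ hyp
    apply mul_right_cancel₀ hl0
    rw [mul_pow] at e1 e2
    have e4 : y ^ (2 * m + 1) * (2 * D.coeff (2 * m + 1) * lam ^ (2 * m + 1) / l *
        z ^ (2 * m + 1)) * l = y ^ (2 * m + 1) * (2 * D.coeff (2 * m + 1) * lam ^ (2 * m + 1) *
        z ^ (2 * m + 1)) := by field_simp
    rw [e4]
    linear_combination e1 + e2 + (lam : ℂ) ^ (2 * m + 1) * z ^ (2 * m + 1) * e3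
  refine ⟨E, ⟨?_, hEmonic.ne_zero, ?_, ?_⟩, hEreal, ?_⟩
  · rw [hE, natDegree_multiset_prod_X_sub_C_eq_card, hMlam]
    simp [hcard']
    omega
  · intro i hi him
    rw [hn] at him
    have := congrArg (fun p => coeff p i) hEodd
    simp only [coeff_sub, aux_comp, coeff_C_mul, coeff_X_pow, him, if_false,
      hi.neg_one_pow] at this
    linear_combination this / 2
  · intro z hz
    rw [← aux_conj E hEreal, hn2, map_inv₀, Complex.conj_conj]
    obtain ⟨y, hy, hzy⟩ := hY z hz
    have e1 := key z y hz hy hzy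
    have e2 := key z⁻¹ y (inv_ne_zero hz) hy (by
      field_simp
      linear_combination hzy)
    have hyp : y ^ (2 * m + 1) ≠ 0 := pow_ne_zero _ hy
    apply mul_left_cancel₀ hyp
    apply mul_right_cancel₀ hl0
    rw [e1]
    have e3 : (lam * z) ^ (2 * m + 1) = z ^ (2 * (2 * m + 1)) * (lam * z⁻¹) ^ (2 * m + 1) := by
      rw [pow_mul, ← mul_pow]
      congr 1
      field_simp
    rw [e3]
    linear_combination -z ^ (2 * (2 * m + 1)) * e2
  · rw [hE, roots_multiset_prod_X_sub_C]
end
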